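/- arXiv:math/0409553 — 6 statements merged into one kernel-verified Lean document; each statement's English description precedes it below -/
import Mathlib

section
/- Let E be a finite-dimensional real inner product space, U ⊆ E a nonempty open set, and φ : U → ℂⁿ a differentiable map. Then φ is pseudo-horizontally weakly conformal if and only if for every open set V ⊆ ℂⁿ and every holomorphic function ψ : V → ℂ, the function ψ∘φ : φ⁻¹(V) → ℂ is pseudo-horizontally weakly conformal, i.e. writing ψ∘φ = w₁ + i w₂ one has ‖∇w₁(x)‖² = ‖∇w₂(x)‖² and ⟨∇w₁(x), ∇w₂(x)⟩ = 0 for all x ∈ φ⁻¹(V). -/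
/-!
Everything is expressed through the complex-bilinear extension of the metric to differentials:
for `F, G : E → ℂ` and an orthonormal basis `(eᵢ)` put `Q(F, G)(x) = ∑ᵢ dF(eᵢ) dG(eᵢ)`. Its real
and imaginary parts are exactly the two expressions in the definition of pseudo-horizontal weak
conformality (`gradProd_re`, `gradProd_im`), so `φ` is PHWC iff `Q(φᴬ, φᴮ) = 0` for all `A, B`
(`phwcOn_iff_gradProd`), and `ψ ∘ φ` is PHWC iff `Q(ψ ∘ φ, ψ ∘ φ) = 0`
(`gradProd_self_eq_zero_iff`).

If `ψ` is holomorphic, the chain rule has only `∂ψ/∂zᴬ` terms, hence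
`Q(ψ ∘ φ, ψ ∘ φ) = ∑ (∂ψ/∂zᴬ)(∂ψ/∂zᴮ) Q(φᴬ, φᴮ)`, which gives the forward direction. Conversely,
the test functions `ψ = zᴬ + zᴮ` suffice: taking `A = B` gives `Q(φᴬ, φᴬ) = 0`, and
polarization then gives `Q(φᴬ, φᴮ) = 0`.
-/

open scoped RealInnerProductSpace

/-- The Laplacian of a real-valued function on an inner product space:
the trace of the derivative of the gradient (i.e. of the second derivative). -/
noncomputable def lap {E : Type*} [NormedAddCommGroup E] [InnerProductSpace ℝ E]
    [CompleteSpace E] (f : E → ℝ) (x : E) : ℝ :=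
  LinearMap.trace ℝ E (fderiv ℝ (gradient f) x : E →ₗ[ℝ] E)

/-- A real-valued function is harmonic on an open set `W` if it is `C²` there and its
Laplacian vanishes identically on `W`. -/
def HarmonicOn {E : Type*} [NormedAddCommGroup E] [InnerProductSpace ℝ E]
    [CompleteSpace E] (f : E → ℝ) (W : Set E) : Prop :=
  ContDiffOn ℝ 2 f W ∧ ∀ x ∈ W, lap f x = 0

/-- Pseudo-horizontally weakly conformal map into `ℂⁿ`, on a set `U`. -/
def PHWCOn {E : Type*} [NormedAddCommGroup E] [InnerProductSpace ℝ E] [CompleteSpace E]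
    {n : ℕ} (φ : E → (Fin n → ℂ)) (U : Set E) : Prop :=
  ∀ A B : Fin n, ∀ x ∈ U,
    ⟪gradient (fun y => (φ y A).re) x, gradient (fun y => (φ y B).re) x⟫ -
      ⟪gradient (fun y => (φ y A).im) x, gradient (fun y => (φ y B).im) x⟫ = 0 ∧
    ⟪gradient (fun y => (φ y A).im) x, gradient (fun y => (φ y B).re) x⟫ +
      ⟪gradient (fun y => (φ y A).re) x, gradient (fun y => (φ y B).im) x⟫ = 0

/-- Pseudo harmonic morphism into `ℂⁿ` on a set `U`: a `C²` map which is harmonic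
(the real and imaginary parts of each component are harmonic) and
pseudo-horizontally weakly conformal. -/
def PHMOn {E : Type*} [NormedAddCommGroup E] [InnerProductSpace ℝ E] [CompleteSpace E]
    {n : ℕ} (φ : E → (Fin n → ℂ)) (U : Set E) : Prop :=
  ContDiffOn ℝ 2 φ U ∧
  (∀ k : Fin n, HarmonicOn (fun y => (φ y k).re) U ∧ HarmonicOn (fun y => (φ y k).im) U) ∧
  PHWCOn φ U

lemma fderiv_re_apply {E : Type*} [NormedAddCommGroup E] [NormedSpace ℝ E]
    {F : E → ℂ} {x : E} (hF : DifferentiableAt ℝ F x) (v : E) :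
    fderiv ℝ (fun y => (F y).re) x v = (fderiv ℝ F x v).re := by
  have h := (Complex.reCLM.hasFDerivAt (x := F x)).comp x hF.hasFDerivAt
  have h' : HasFDerivAt (fun y => (F y).re) (Complex.reCLM.comp (fderiv ℝ F x)) x := h
  simp [h'.fderiv]

lemma fderiv_im_apply {E : Type*} [NormedAddCommGroup E] [NormedSpace ℝ E]
    {F : E → ℂ} {x : E} (hF : DifferentiableAt ℝ F x) (v : E) :
    fderiv ℝ (fun y => (F y).im) x v = (fderiv ℝ F x v).im := by
  have h := (Complex.imCLM.hasFDerivAt (x := F x)).comp x hF.hasFDerivAt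
  have h' : HasFDerivAt (fun y => (F y).im) (Complex.imCLM.comp (fderiv ℝ F x)) x := h
  simp [h'.fderiv]

section GradProd

variable {E : Type*} [NormedAddCommGroup E] [InnerProductSpace ℝ E] [FiniteDimensional ℝ E]

/-- The complex-bilinear extension `∑ᵢ dF(eᵢ) dG(eᵢ)` of the inner product of gradients to
complex-valued functions, computed in the standard orthonormal basis of `E`. There is no complex
conjugation. -/
noncomputable def gradProd (F G : E → ℂ) (x : E) : ℂ :=
  ∑ i, fderiv ℝ F x (stdOrthonormalBasis ℝ E i) * fderiv ℝ G x (stdOrthonormalBasis ℝ E i)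

lemma inner_gradient_eq_sum (f g : E → ℝ) (x : E) :
    ⟪gradient f x, gradient g x⟫ =
      ∑ i, fderiv ℝ f x (stdOrthonormalBasis ℝ E i) *
        fderiv ℝ g x (stdOrthonormalBasis ℝ E i) := by
  rw [← (stdOrthonormalBasis ℝ E).sum_inner_mul_inner]
  refine Finset.sum_congr rfl fun i _ => ?_
  rw [real_inner_comm (gradient g x)]
  simp [gradient, InnerProductSpace.toDual_symm_apply]

lemma gradProd_re {F G : E → ℂ} {x : E} (hF : DifferentiableAt ℝ F x)
    (hG : DifferentiableAt ℝ G x) :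
    (gradProd F G x).re =
      ⟪gradient (fun y => (F y).re) x, gradient (fun y => (G y).re) x⟫ -
        ⟪gradient (fun y => (F y).im) x, gradient (fun y => (G y).im) x⟫ := by
  simp only [inner_gradient_eq_sum, fderiv_re_apply hF, fderiv_re_apply hG, fderiv_im_apply hF,
    fderiv_im_apply hG, gradProd, Complex.re_sum, Complex.mul_re, Finset.sum_sub_distrib]

lemma gradProd_im {F G : E → ℂ} {x : E} (hF : DifferentiableAt ℝ F x)
    (hG : DifferentiableAt ℝ G x) :
    (gradProd F G x).im =
      ⟪gradient (fun y => (F y).im) x, gradient (fun y => (G y).re) x⟫ +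
        ⟪gradient (fun y => (F y).re) x, gradient (fun y => (G y).im) x⟫ := by
  simp only [inner_gradient_eq_sum, fderiv_re_apply hF, fderiv_re_apply hG, fderiv_im_apply hF,
    fderiv_im_apply hG, gradProd, Complex.im_sum, Complex.mul_im, Finset.sum_add_distrib]
  exact add_comm _ _

lemma gradProd_self_eq_zero_iff {F : E → ℂ} {x : E} (hF : DifferentiableAt ℝ F x) :
    gradProd F F x = 0 ↔
      ‖gradient (fun y => (F y).re) x‖ ^ 2 = ‖gradient (fun y => (F y).im) x‖ ^ 2 ∧
        ⟪gradient (fun y => (F y).re) x, gradient (fun y => (F y).im) x⟫ = 0 := by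
  rw [Complex.ext_iff, gradProd_re hF hF, gradProd_im hF hF,
    real_inner_comm (gradient (fun y => (F y).re) x) (gradient (fun y => (F y).im) x),
    real_inner_self_eq_norm_sq, real_inner_self_eq_norm_sq, Complex.zero_re, Complex.zero_im,
    sub_eq_zero, add_self_eq_zero]

lemma phwcOn_iff_gradProd {n : ℕ} {U : Set E} {φ : E → (Fin n → ℂ)}
    (hφ : ∀ x ∈ U, DifferentiableAt ℝ φ x) :
    PHWCOn φ U ↔
      ∀ A B : Fin n, ∀ x ∈ U, gradProd (fun y => φ y A) (fun y => φ y B) x = 0 := by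
  refine forall_congr' fun A => forall_congr' fun B => forall₂_congr fun x hx => ?_
  have h := differentiableAt_pi.1 (hφ x hx)
  rw [Complex.ext_iff, gradProd_re (h A) (h B), gradProd_im (h A) (h B), Complex.zero_re,
    Complex.zero_im]

/-- The chain rule for `gradProd`: complex linearity of `dψ` means that only the products
`Q(φᴬ, φᴮ)` occur, with the complex partial derivatives of `ψ` as coefficients. -/
lemma gradProd_comp {n : ℕ} {φ : E → (Fin n → ℂ)} {ψ : (Fin n → ℂ) → ℂ} {x : E}
    (hφ : DifferentiableAt ℝ φ x) (hψ : DifferentiableAt ℂ ψ (φ x)) :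
    gradProd (fun y => ψ (φ y)) (fun y => ψ (φ y)) x =
      ∑ A, ∑ B, fderiv ℂ ψ (φ x) (Pi.single A 1) * fderiv ℂ ψ (φ x) (Pi.single B 1) *
        gradProd (fun y => φ y A) (fun y => φ y B) x := by
  have hd : ∀ v, fderiv ℝ (fun y => ψ (φ y)) x v =
      ∑ A, fderiv ℂ ψ (φ x) (Pi.single A 1) * fderiv ℝ (fun y => φ y A) x v := by
    intro v
    have h : HasFDerivAt (fun y => ψ (φ y))
        (((fderiv ℂ ψ (φ x)).restrictScalars ℝ).comp (fderiv ℝ φ x)) x :=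
      (hψ.hasFDerivAt.restrictScalars ℝ).comp x hφ.hasFDerivAt
    have hc : ∀ A, fderiv ℝ (fun y => φ y A) x v = fderiv ℝ φ x v A := fun A => by
      rw [(hasFDerivAt_pi'.1 hφ.hasFDerivAt A).fderiv]
      rfl
    rw [h.fderiv]
    change fderiv ℂ ψ (φ x) (fderiv ℝ φ x v) = _
    conv_lhs => rw [pi_eq_sum_univ' (fderiv ℝ φ x v)]
    rw [map_sum]
    refine Finset.sum_congr rfl fun A _ => ?_
    rw [map_smul, smul_eq_mul, hc, mul_comm]
  simp only [gradProd, hd, Finset.sum_mul_sum]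
  simp only [Finset.mul_sum]
  rw [Finset.sum_comm]
  refine Finset.sum_congr rfl fun A _ => ?_
  rw [Finset.sum_comm]
  refine Finset.sum_congr rfl fun B _ => Finset.sum_congr rfl fun i _ => ?_
  ring

lemma gradProd_add_self {F G : E → ℂ} {x : E} (hF : DifferentiableAt ℝ F x)
    (hG : DifferentiableAt ℝ G x) :
    gradProd (fun y => F y + G y) (fun y => F y + G y) x =
      gradProd F F x + 2 * gradProd F G x + gradProd G G x := by
  simp only [gradProd, fderiv_fun_add hF hG, add_apply, Finset.mul_sum,
    ← Finset.sum_add_distrib]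
  refine Finset.sum_congr rfl fun i _ => ?_
  ring

end GradProd

/-- A differentiable map `φ : U → ℂⁿ` is pseudo-horizontally weakly conformal if and only if,
for every open set `V ⊆ ℂⁿ` and every holomorphic function `ψ : V → ℂ`, the composition
`ψ ∘ φ` is pseudo-horizontally weakly conformal on `φ⁻¹(V)`. -/
theorem phwc_iff_comp_holom_fun_phwc {E : Type*} [NormedAddCommGroup E]
    [InnerProductSpace ℝ E] [FiniteDimensional ℝ E] {n : ℕ}
    (U : Set E) (hU : IsOpen U) (hUne : U.Nonempty)
    (φ : E → (Fin n → ℂ)) (hφ : DifferentiableOn ℝ φ U) :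
    PHWCOn φ U ↔
    ∀ V : Set (Fin n → ℂ), IsOpen V → ∀ ψ : (Fin n → ℂ) → ℂ, DifferentiableOn ℂ ψ V →
      ∀ x ∈ U ∩ φ ⁻¹' V,
        ‖gradient (fun y => (ψ (φ y)).re) x‖ ^ 2 = ‖gradient (fun y => (ψ (φ y)).im) x‖ ^ 2 ∧
        ⟪gradient (fun y => (ψ (φ y)).re) x, gradient (fun y => (ψ (φ y)).im) x⟫ = 0 := by
  have hd : ∀ x ∈ U, DifferentiableAt ℝ φ x := fun x hx =>
    (hφ x hx).differentiableAt (hU.mem_nhds hx)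
  rw [phwcOn_iff_gradProd hd]
  constructor
  · intro h V hV ψ hψ x hx
    have hψx : DifferentiableAt ℂ ψ (φ x) := (hψ _ hx.2).differentiableAt (hV.mem_nhds hx.2)
    have hcomp : DifferentiableAt ℝ (fun y => ψ (φ y)) x :=
      (hψx.restrictScalars ℝ).comp x (hd x hx.1)
    rw [← gradProd_self_eq_zero_iff hcomp, gradProd_comp (hd x hx.1) hψx]
    exact Finset.sum_eq_zero fun A _ => Finset.sum_eq_zero fun B _ => by
      rw [h A B x hx.1, mul_zero]
  · intro h A B x hx
    have hc := differentiableAt_pi.1 (hd x hx)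
    have key : ∀ C D : Fin n,
        gradProd (fun y => φ y C + φ y D) (fun y => φ y C + φ y D) x = 0 := fun C D =>
      (gradProd_self_eq_zero_iff ((hc C).fun_add (hc D))).2
        (h Set.univ isOpen_univ (fun z => z C + z D) (by fun_prop) x ⟨hx, trivial⟩)
    have hself : ∀ C : Fin n, gradProd (fun y => φ y C) (fun y => φ y C) x = 0 := fun C => by
      have hCC := key C C
      rw [gradProd_add_self (hc C) (hc C)] at hCC
      linear_combination hCC / 4
    have hAB := key A B
    rw [gradProd_add_self (hc A) (hc B), hself A, hself B] at hAB
    linear_combination hAB / 2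
end

section
/- Let E be a finite-dimensional real inner product space, U ⊆ E a nonempty open set, and φ : U → ℂⁿ a C² map. Then φ is a pseudo harmonic morphism (i.e. φ is harmonic and pseudo-horizontally weakly conformal) if and only if for every open set V ⊆ ℂⁿ and every holomorphic function ψ : V → ℂ, the real and imaginary parts of ψ∘φ are harmonic on the open set φ⁻¹(V). -/
/-!
For a `C²` map `φ` and a holomorphic function `ψ`, the chain rule gives
`Δ(ψ ∘ φ) = ∑_A ∂_A ψ Δφ^A + ∑_{A,B} ∂_A ∂_B ψ S_{AB}` with `S_{AB} = ∑ᵢ dφ^A(eᵢ) dφ^B(eᵢ)`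
(`laplacian_comp`). The equations `S_{AB} = 0` are exactly pseudo-horizontal weak conformality
(`pairing_eq_zero_iff`), so a pseudo harmonic morphism annihilates both terms. Conversely, the
test functions `z_k` force `Δφ^k = 0`, and then `z_A z_B` forces `2 S_{AB} = 0`.

The chain rule needs `ψ` to be `C²`, whereas holomorphic only means complex differentiable. The
regularity of holomorphic functions of several variables (`contDiffOn_two_of_holo`) is obtained
from one-variable theory on complex lines: Cauchy's estimate shows that the derivative is
continuous, and Cauchy's formula for directional derivatives can then be differentiated under the
integral sign.
-/

open scoped RealInnerProductSpace

open Metric Complex Filter Topology Laplacian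

/-! ### Regularity of holomorphic functions of several variables -/

theorem hasDerivAt_line {G F : Type*} [NormedAddCommGroup G] [NormedSpace ℂ G]
    [NormedAddCommGroup F] [NormedSpace ℂ F] {f : G → F} {x : G} (hf : DifferentiableAt ℂ f x)
    (v : G) : HasDerivAt (fun ζ : ℂ => f (x + ζ • v)) (fderiv ℂ f x v) 0 := by
  have h1 : HasDerivAt (fun ζ : ℂ => x + ζ • v) v 0 := by
    simpa using ((hasDerivAt_id (0 : ℂ)).smul_const v).const_add x
  have h2 : HasFDerivAt f (fderiv ℂ f x) (x + (0 : ℂ) • v) := by simpa using hf.hasFDerivAt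
  exact h2.comp_hasDerivAt (0 : ℂ) h1

theorem differentiableOn_line {G F : Type*} [NormedAddCommGroup G] [NormedSpace ℂ G]
    [NormedAddCommGroup F] [NormedSpace ℂ F] {V : Set G} {f : G → F}
    (hf : DifferentiableOn ℂ f V) (x v : G) :
    DifferentiableOn ℂ (fun ζ : ℂ => f (x + ζ • v)) ((fun ζ : ℂ => x + ζ • v) ⁻¹' V) :=
  hf.comp (by fun_prop) (fun _ h => h)

/-- A complex differentiable map on an open subset of a finite-dimensional space has a continuous
derivative. Cauchy's estimate on the disc `ζ ↦ f (x + ζ v) - f (x₀ + ζ v)` bounds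
`(f' x - f' x₀) v` by the oscillation of `f`, which is small by uniform continuity. -/
theorem contDiffOn_one_of_holo {G F : Type*} [NormedAddCommGroup G] [NormedSpace ℂ G]
    [FiniteDimensional ℂ G] [NormedAddCommGroup F] [NormedSpace ℂ F]
    {V : Set G} (hV : IsOpen V) {f : G → F} (hf : DifferentiableOn ℂ f V) :
    ContDiffOn ℂ 1 f V := by
  have : ProperSpace G := FiniteDimensional.proper ℂ G
  rw [show (1 : WithTop ℕ∞) = 0 + 1 from rfl, contDiffOn_succ_iff_fderiv_of_isOpen hV,
    contDiffOn_zero]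
  refine ⟨hf, by simp, fun x₀ hx₀ => ContinuousAt.continuousWithinAt ?_⟩
  obtain ⟨r, hr, hrV⟩ : ∃ r > 0, closedBall x₀ (2 * r) ⊆ V := by
    obtain ⟨r, hr, h⟩ := nhds_basis_closedBall.mem_iff.1 (hV.mem_nhds hx₀)
    exact ⟨r / 2, by positivity, by convert h using 2; ring⟩
  have huc : UniformContinuousOn f (closedBall x₀ (2 * r)) :=
    (isCompact_closedBall _ _).uniformContinuousOn_of_continuous (hf.continuousOn.mono hrV)
  rw [Metric.continuousAt_iff]
  intro ε hε
  obtain ⟨δ, hδ, H⟩ := Metric.uniformContinuousOn_iff.1 huc (ε / 2 * r) (by positivity)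
  refine ⟨min δ r, by positivity, fun x hx => ?_⟩
  have hxδ : dist x x₀ < δ := hx.trans_le (min_le_left _ _)
  have hxr : dist x x₀ < r := hx.trans_le (min_le_right _ _)
  rw [dist_eq_norm]
  refine lt_of_le_of_lt (ContinuousLinearMap.opNorm_le_of_unit_norm (by positivity) ?_)
    (half_lt_self hε)
  intro v hv
  have hmem : ∀ y : G, dist y x₀ ≤ r → ∀ ζ : ℂ, ‖ζ‖ ≤ r → y + ζ • v ∈ closedBall x₀ (2 * r) := by
    intro y hy ζ hζ
    rw [mem_closedBall, dist_eq_norm]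
    calc ‖y + ζ • v - x₀‖ = ‖(y - x₀) + ζ • v‖ := by congr 1; abel
      _ ≤ ‖y - x₀‖ + ‖ζ • v‖ := norm_add_le _ _
      _ ≤ r + r := by
        rw [← dist_eq_norm, norm_smul, hv, mul_one]; exact add_le_add hy hζ
      _ = 2 * r := by ring
  have hline : ∀ y : G, dist y x₀ ≤ r →
      DifferentiableOn ℂ (fun ζ : ℂ => f (y + ζ • v)) (closedBall 0 r) := fun y hy =>
    (differentiableOn_line hf y v).mono fun ζ hζ => hrV (hmem y hy ζ (by simpa using hζ))
  have hx₀r : dist x₀ x₀ ≤ r := by simpa using hr.le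
  have hD := (hasDerivAt_line (hf.differentiableAt (hV.mem_nhds
      (hrV (by simpa using hmem x hxr.le 0 (by simpa using hr.le))))) v).sub
    (hasDerivAt_line (hf.differentiableAt (hV.mem_nhds hx₀)) v)
  have hC := norm_deriv_le_of_forall_mem_sphere_norm_le (C := ε / 2 * r) hr
    (((hline x hxr.le).sub (hline x₀ hx₀r)).diffContOnCl_ball subset_rfl) (fun ζ hζ => by
      have hζ' : ‖ζ‖ ≤ r := by simpa using (mem_sphere.1 hζ).le
      have := H _ (hmem x hxr.le ζ hζ') _ (hmem x₀ hx₀r ζ hζ') (by simpa using hxδ)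
      rw [dist_eq_norm] at this
      exact this.le)
  rw [hD.deriv, mul_div_cancel_right₀ _ hr.ne'] at hC
  exact hC

/-- Directional derivatives of a holomorphic map are holomorphic: Cauchy's formula writes
`f' x v` as `(2πi)⁻¹ ∮ ζ⁻² f (x + ζ v) dζ` with a radius that is uniform in `x` near `x₀`, and one
differentiates under the integral sign, using that `f` is `C¹`. -/
theorem differentiableOn_fderiv_apply_of_holo {G F : Type*} [NormedAddCommGroup G]
    [NormedSpace ℂ G] [FiniteDimensional ℂ G] [NormedAddCommGroup F] [NormedSpace ℂ F]
    [CompleteSpace F] {V : Set G} (hV : IsOpen V) {f : G → F} (hf : DifferentiableOn ℂ f V)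
    (v : G) : DifferentiableOn ℂ (fun x => fderiv ℂ f x v) V := by
  have : ProperSpace G := FiniteDimensional.proper ℂ G
  intro x₀ hx₀
  refine DifferentiableAt.differentiableWithinAt ?_
  obtain ⟨R, hR, hRV⟩ : ∃ R > 0, closedBall x₀ (2 * R) ⊆ V := by
    obtain ⟨r, hr, h⟩ := nhds_basis_closedBall.mem_iff.1 (hV.mem_nhds hx₀)
    exact ⟨r / 2, by positivity, by convert h using 2; ring⟩
  have hf'c : ContinuousOn (fderiv ℂ f) V :=
    (contDiffOn_one_of_holo hV hf).continuousOn_fderiv_of_isOpen hV le_rfl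
  obtain ⟨M, hM⟩ := (isCompact_closedBall x₀ (2 * R)).exists_bound_of_continuousOn
    (hf'c.mono hRV)
  obtain ⟨r, hr, hrv⟩ : ∃ r > 0, r * ‖v‖ ≤ R :=
    ⟨R / (‖v‖ + 1), by positivity, by
      rw [div_mul_eq_mul_div, div_le_iff₀ (by positivity)]; nlinarith [norm_nonneg v]⟩
  have hmem : ∀ y ∈ ball x₀ R, ∀ ζ : ℂ, ‖ζ‖ ≤ r → y + ζ • v ∈ closedBall x₀ (2 * R) := by
    intro y hy ζ hζ
    rw [mem_closedBall, dist_eq_norm]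
    calc ‖y + ζ • v - x₀‖ = ‖(y - x₀) + ζ • v‖ := by congr 1; abel
      _ ≤ ‖y - x₀‖ + ‖ζ • v‖ := norm_add_le _ _
      _ ≤ R + R := by
        rw [← dist_eq_norm, norm_smul]
        exact add_le_add (mem_ball.1 hy).le ((mul_le_mul_of_nonneg_right hζ (norm_nonneg v)).trans hrv)
      _ = 2 * R := by ring
  have hcm : ∀ θ : ℝ, ‖circleMap 0 r θ‖ ≤ r := fun θ => by simp [abs_of_pos hr]
  have hcauchy : ∀ x ∈ ball x₀ R, (2 * Real.pi * I : ℂ)⁻¹ •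
      ∮ ζ in C(0, r), ((ζ - 0) ^ 2)⁻¹ • f (x + ζ • v) = fderiv ℂ f x v := by
    intro x hx
    rw [two_pi_I_inv_smul_circleIntegral_sub_sq_inv_smul_of_differentiable
      (hV.preimage (f := fun ζ : ℂ => x + ζ • v) (by fun_prop))
      (fun ζ hζ => hRV (hmem x hx ζ (by simpa using hζ)))
      (differentiableOn_line hf x v) (mem_ball_self hr)]
    refine (hasDerivAt_line (hf.differentiableAt (hV.mem_nhds (hRV ?_))) v).deriv
    simpa using hmem x hx 0 (by simpa using hr.le)
  refine DifferentiableAt.congr_of_eventuallyEq ?_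
    (eventually_of_mem (ball_mem_nhds x₀ hR) fun x hx => (hcauchy x hx).symm)
  refine DifferentiableAt.const_smul ?_ _
  simp only [circleIntegral]
  -- `c` collects the scalar factors of the circle integral after parametrizing by the angle.
  set c : ℝ → ℂ := fun θ => deriv (circleMap 0 r) θ * ((circleMap 0 r θ - 0) ^ 2)⁻¹ with hcdef
  have hcc : Continuous c := by
    have h0 : ∀ θ, (circleMap 0 r θ - 0) ^ 2 ≠ 0 := fun θ => by
      simpa using hr.ne'
    simp only [hcdef, deriv_circleMap]
    have := continuous_circleMap 0 r
    exact (this.mul continuous_const).mul (((this.sub continuous_const).pow 2).inv₀ h0)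
  have hpath : ∀ x : G, Continuous fun θ : ℝ => x + circleMap 0 r θ • v := fun x => by
    have := continuous_circleMap 0 r
    fun_prop
  have hFc : ∀ x ∈ ball x₀ R, Continuous fun θ => c θ • f (x + circleMap 0 r θ • v) :=
    fun x hx => hcc.smul (hf.continuousOn.comp_continuous (hpath x)
      fun θ => hRV (hmem x hx _ (hcm θ)))
  have key := intervalIntegral.hasFDerivAt_integral_of_dominated_of_fderiv_le
    (𝕜 := ℂ) (μ := MeasureTheory.volume) (a := 0) (b := 2 * Real.pi) (s := ball x₀ R) (x₀ := x₀)
    (F := fun x θ => c θ • f (x + circleMap 0 r θ • v))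
    (F' := fun x θ => c θ • fderiv ℂ f (x + circleMap 0 r θ • v))
    (bound := fun θ => ‖c θ‖ * M) (ball_mem_nhds x₀ hR)
    (eventually_of_mem (ball_mem_nhds x₀ hR) fun x hx => (hFc x hx).aestronglyMeasurable)
    ((hFc x₀ (mem_ball_self hR)).intervalIntegrable _ _)
    (hcc.smul (hf'c.comp_continuous (hpath x₀)
      fun θ => hRV (hmem x₀ (mem_ball_self hR) _ (hcm θ)))).aestronglyMeasurable
    (.of_forall fun θ _ x hx => by
      rw [norm_smul]
      exact mul_le_mul_of_nonneg_left (hM _ (hmem x hx _ (hcm θ))) (norm_nonneg _))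
    ((hcc.norm.mul continuous_const).intervalIntegrable _ _)
    (.of_forall fun θ _ x hx => by
      have h := (hf.differentiableAt (hV.mem_nhds (hRV (hmem x hx _ (hcm θ))))).hasFDerivAt
      exact ((hasFDerivAt_comp_add_right _).2 h).const_smul (c θ))
  refine key.differentiableAt.congr_of_eventuallyEq (.of_forall fun x => ?_)
  simp only [hcdef, mul_smul]

theorem contDiffOn_two_of_holo {G F : Type*} [NormedAddCommGroup G] [NormedSpace ℂ G]
    [FiniteDimensional ℂ G] [NormedAddCommGroup F] [NormedSpace ℂ F] [CompleteSpace F]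
    {V : Set G} (hV : IsOpen V) {f : G → F} (hf : DifferentiableOn ℂ f V) :
    ContDiffOn ℂ 2 f V := by
  rw [show (2 : WithTop ℕ∞) = 1 + 1 from rfl, contDiffOn_succ_iff_fderiv_of_isOpen hV]
  refine ⟨hf, by simp, ?_⟩
  rw [contDiffOn_clm_apply]
  exact fun v => contDiffOn_one_of_holo hV (differentiableOn_fderiv_apply_of_holo hV hf v)

/-! ### The Laplacian of a composition -/

/-- At points where `f` is `C²`, the trace of the derivative of the gradient agrees with Mathlib's
Laplacian, the trace of the second derivative. -/
theorem lap_eq_laplacian {E : Type*} [NormedAddCommGroup E] [InnerProductSpace ℝ E]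
    [FiniteDimensional ℝ E] {f : E → ℝ} {x : E} (hf : ContDiffAt ℝ 2 f x) :
    lap f x = Δ f x := by
  set b := stdOrthonormalBasis ℝ E
  have hd : DifferentiableAt ℝ (fderiv ℝ f) x :=
    (hf.fderiv_right (m := 1) (by norm_num)).differentiableAt (by norm_num)
  have hg : gradient f = fun y => ∑ i, fderiv ℝ f y (b i) • b i := by
    ext1 y
    rw [← b.sum_repr' (gradient f y)]
    simp only [real_inner_comm, inner_gradient_left]
  have hG : DifferentiableAt ℝ (gradient f) x := by
    rw [hg]; fun_prop
  rw [lap, LinearMap.trace_eq_sum_inner _ b,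
    InnerProductSpace.laplacian_eq_iteratedFDeriv_orthonormalBasis f b]
  refine Finset.sum_congr rfl fun i _ => ?_
  rw [iteratedFDeriv_two_apply]
  have h1 : HasFDerivAt (fun y => inner ℝ (b i) (gradient f y))
      ((innerSL ℝ (b i)).comp (fderiv ℝ (gradient f) x)) x :=
    (innerSL ℝ (b i)).hasFDerivAt.comp x hG.hasFDerivAt
  have h2 : HasFDerivAt (fun y => inner ℝ (b i) (gradient f y))
      ((ContinuousLinearMap.apply ℝ ℝ (b i)).comp (fderiv ℝ (fderiv ℝ f) x)) x := by
    have : (fun y => inner ℝ (b i) (gradient f y)) = fun y => fderiv ℝ f y (b i) := by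
      ext y; rw [real_inner_comm, inner_gradient_left]
    rw [this]
    exact (ContinuousLinearMap.apply ℝ ℝ (b i)).hasFDerivAt.comp x hd.hasFDerivAt
  simpa using DFunLike.congr_fun (h1.unique h2) (b i)

/-- The real and imaginary parts of `g` have vanishing Laplacian at `x` exactly when the
complex-valued Laplacian of `g` vanishes there. -/
theorem lap_re_im_eq_zero_iff {E : Type*} [NormedAddCommGroup E] [InnerProductSpace ℝ E]
    [FiniteDimensional ℝ E] {g : E → ℂ} {x : E} (hg : ContDiffAt ℝ 2 g x) :
    (lap (fun y => (g y).re) x = 0 ∧ lap (fun y => (g y).im) x = 0) ↔ Δ g x = 0 := by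
  have hre : ContDiffAt ℝ 2 (fun y => (g y).re) x := reCLM.contDiff.contDiffAt.comp x hg
  have him : ContDiffAt ℝ 2 (fun y => (g y).im) x := imCLM.contDiff.contDiffAt.comp x hg
  rw [lap_eq_laplacian hre, lap_eq_laplacian him, Complex.ext_iff]
  exact and_congr (by rw [← show (Δ (reCLM ∘ g)) x = (Δ g x).re from hg.laplacian_CLM_comp_left]; rfl)
    (by rw [← show (Δ (imCLM ∘ g)) x = (Δ g x).im from hg.laplacian_CLM_comp_left]; rfl)

theorem harmonicOn_re_im_iff {E : Type*} [NormedAddCommGroup E] [InnerProductSpace ℝ E]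
    [FiniteDimensional ℝ E] {g : E → ℂ} {W : Set E} (hW : IsOpen W) (hg : ContDiffOn ℝ 2 g W) :
    (HarmonicOn (fun y => (g y).re) W ∧ HarmonicOn (fun y => (g y).im) W) ↔
      ∀ x ∈ W, Δ g x = 0 := by
  have hre : ContDiffOn ℝ 2 (fun y => (g y).re) W := reCLM.contDiff.comp_contDiffOn hg
  have him : ContDiffOn ℝ 2 (fun y => (g y).im) W := imCLM.contDiff.comp_contDiffOn hg
  have h := fun x hx => lap_re_im_eq_zero_iff (hg.contDiffAt (hW.mem_nhds (x := x) hx))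
  exact ⟨fun H x hx => (h x hx).1 ⟨H.1.2 x hx, H.2.2 x hx⟩,
    fun H => ⟨⟨hre, fun x hx => ((h x hx).2 (H x hx)).1⟩,
      ⟨him, fun x hx => ((h x hx).2 (H x hx)).2⟩⟩⟩

/-- The complex-bilinear pairing `∑ᵢ dφ^A(eᵢ) dφ^B(eᵢ)` of the differentials of two components of
`φ` at `x`, for the standard orthonormal basis `eᵢ` of `E`. No conjugation is involved. -/
noncomputable def pairing {E : Type*} [NormedAddCommGroup E] [InnerProductSpace ℝ E]
    [FiniteDimensional ℝ E] {n : ℕ} (φ : E → (Fin n → ℂ)) (x : E) (A B : Fin n) : ℂ :=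
  ∑ i, fderiv ℝ φ x (stdOrthonormalBasis ℝ E i) A * fderiv ℝ φ x (stdOrthonormalBasis ℝ E i) B

/-- The two real equations of pseudo-horizontal weak conformality are the real and imaginary parts
of the vanishing of `pairing`. -/
theorem pairing_eq_zero_iff {E : Type*} [NormedAddCommGroup E] [InnerProductSpace ℝ E]
    [FiniteDimensional ℝ E] {n : ℕ} {φ : E → (Fin n → ℂ)} {x : E} (hφ : DifferentiableAt ℝ φ x)
    (A B : Fin n) :
    pairing φ x A B = 0 ↔
    ⟪gradient (fun y => (φ y A).re) x, gradient (fun y => (φ y B).re) x⟫ -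
      ⟪gradient (fun y => (φ y A).im) x, gradient (fun y => (φ y B).im) x⟫ = 0 ∧
    ⟪gradient (fun y => (φ y A).im) x, gradient (fun y => (φ y B).re) x⟫ +
      ⟪gradient (fun y => (φ y A).re) x, gradient (fun y => (φ y B).im) x⟫ = 0 := by
  have hcomp : ∀ k : Fin n, HasFDerivAt (fun y => φ y k)
      ((ContinuousLinearMap.proj (R := ℝ) (φ := fun _ => ℂ) k).comp (fderiv ℝ φ x)) x := fun k =>
    (ContinuousLinearMap.proj (R := ℝ) (φ := fun _ : Fin n => ℂ) k).hasFDerivAt.comp x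
      hφ.hasFDerivAt
  have hre : ∀ k v, fderiv ℝ (fun y => (φ y k).re) x v = (fderiv ℝ φ x v k).re := fun k v => by
    have h : HasFDerivAt (fun y => (φ y k).re) _ x := reCLM.hasFDerivAt.comp x (hcomp k)
    rw [h.fderiv]; rfl
  have him : ∀ k v, fderiv ℝ (fun y => (φ y k).im) x v = (fderiv ℝ φ x v k).im := fun k v => by
    have h : HasFDerivAt (fun y => (φ y k).im) _ x := imCLM.hasFDerivAt.comp x (hcomp k)
    rw [h.fderiv]; rfl
  have hin : ∀ f g : E → ℝ, ⟪gradient f x, gradient g x⟫ =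
      ∑ i, fderiv ℝ f x (stdOrthonormalBasis ℝ E i) * fderiv ℝ g x (stdOrthonormalBasis ℝ E i) := by
    intro f g
    rw [← (stdOrthonormalBasis ℝ E).sum_inner_mul_inner]
    refine Finset.sum_congr rfl fun i _ => ?_
    rw [inner_gradient_left, real_inner_comm, inner_gradient_left]
  simp only [hin, hre, him, ← Finset.sum_sub_distrib, ← Finset.sum_add_distrib, Complex.ext_iff,
    pairing, re_sum, im_sum, mul_re, mul_im, zero_re, zero_im]
  refine and_congr Iff.rfl ?_
  rw [Finset.sum_congr rfl fun i _ => add_comm _ _]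

/-- The composition law for the Laplacian with a holomorphic outer function. Since `ψ''` is complex
bilinear, the second-order term only involves `pairing`. -/
theorem laplacian_comp {E : Type*} [NormedAddCommGroup E] [InnerProductSpace ℝ E]
    [FiniteDimensional ℝ E] {n : ℕ} {φ : E → (Fin n → ℂ)} {x : E} (hφ : ContDiffAt ℝ 2 φ x)
    {ψ : (Fin n → ℂ) → ℂ} (hψ : ContDiffAt ℂ 2 ψ (φ x)) :
    Δ (fun y => ψ (φ y)) x = fderiv ℂ ψ (φ x) (Δ φ x) +
      ∑ A, ∑ B, fderiv ℂ (fderiv ℂ ψ) (φ x) (Pi.single A 1) (Pi.single B 1) *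
        pairing φ x A B := by
  set b := stdOrthonormalBasis ℝ E with hb
  have hφ' : DifferentiableAt ℝ (fderiv ℝ φ) x :=
    (hφ.fderiv_right (m := 1) (by norm_num)).differentiableAt (by norm_num)
  have hψ' : DifferentiableAt ℂ (fderiv ℂ ψ) (φ x) :=
    (hψ.fderiv_right (m := 1) (by norm_num)).differentiableAt (by norm_num)
  have hφd : DifferentiableAt ℝ φ x := hφ.differentiableAt (by norm_num)
  have hev : fderiv ℝ (fun y => ψ (φ y)) =ᶠ[𝓝 x]
      fun y => ((fderiv ℂ ψ (φ y)).restrictScalars ℝ).comp (fderiv ℝ φ y) := by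
    filter_upwards [hφ.eventually (by simp),
      hφ.continuousAt.eventually (hψ.eventually (by simp))] with y hy hy'
    exact (((hy'.differentiableAt (by norm_num)).hasFDerivAt.restrictScalars ℝ).comp y
      (hy.differentiableAt (by norm_num)).hasFDerivAt).fderiv
  have hterm : ∀ e : E, fderiv ℝ (fderiv ℝ (fun y => ψ (φ y))) x e e =
      fderiv ℂ ψ (φ x) (fderiv ℝ (fderiv ℝ φ) x e e) +
      fderiv ℂ (fderiv ℂ ψ) (φ x) (fderiv ℝ φ x e) (fderiv ℝ φ x e) := by
    intro e
    have h1 : HasFDerivAt (fun y => (fderiv ℂ ψ (φ y)).restrictScalars ℝ)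
        ((ContinuousLinearMap.restrictScalarsL ℂ (Fin n → ℂ) ℂ ℝ ℝ).comp
          (((fderiv ℂ (fderiv ℂ ψ) (φ x)).restrictScalars ℝ).comp (fderiv ℝ φ x))) x :=
      (ContinuousLinearMap.restrictScalarsL ℂ (Fin n → ℂ) ℂ ℝ ℝ).hasFDerivAt.comp x
        ((hψ'.hasFDerivAt.restrictScalars ℝ).comp x hφd.hasFDerivAt)
    rw [hev.fderiv_eq, (h1.clm_comp hφ'.hasFDerivAt).fderiv]
    simp
  have hbil : ∀ w : Fin n → ℂ, fderiv ℂ (fderiv ℂ ψ) (φ x) w w =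
      ∑ A, ∑ B, fderiv ℂ (fderiv ℂ ψ) (φ x) (Pi.single A 1) (Pi.single B 1) * (w A * w B) := by
    intro w
    have hw : w = ∑ A, w A • (Pi.single A 1 : Fin n → ℂ) := pi_eq_sum_univ' w
    conv_lhs => rw [hw]
    simp only [map_sum, map_smul, _root_.sum_apply, _root_.smul_apply, smul_eq_mul,
      Finset.mul_sum]
    rw [Finset.sum_comm]
    refine Finset.sum_congr rfl fun A _ => Finset.sum_congr rfl fun B _ => by ring
  rw [InnerProductSpace.laplacian_eq_iteratedFDeriv_orthonormalBasis _ b,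
    InnerProductSpace.laplacian_eq_iteratedFDeriv_orthonormalBasis _ b]
  simp only [iteratedFDeriv_two_apply, Matrix.cons_val_zero, Matrix.cons_val_one, hterm,
    Finset.sum_add_distrib, map_sum, hbil, pairing, Finset.mul_sum]
  congr 1
  rw [Finset.sum_comm]
  exact Finset.sum_congr rfl fun A _ => Finset.sum_comm

/-- A `C²` map `φ : U → ℂⁿ` is a pseudo harmonic morphism if and only if it pulls back
local holomorphic functions on `ℂⁿ` to harmonic functions: for every open `V ⊆ ℂⁿ` and
every holomorphic `ψ : V → ℂ`, the real and imaginary parts of `ψ ∘ φ` are harmonic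
on `φ⁻¹(V)`. -/
theorem phm_iff_pullback_holom_harmonic {E : Type*} [NormedAddCommGroup E]
    [InnerProductSpace ℝ E] [FiniteDimensional ℝ E] {n : ℕ}
    (U : Set E) (hU : IsOpen U) (hUne : U.Nonempty)
    (φ : E → (Fin n → ℂ)) (hφ : ContDiffOn ℝ 2 φ U) :
    PHMOn φ U ↔
    ∀ V : Set (Fin n → ℂ), IsOpen V → ∀ ψ : (Fin n → ℂ) → ℂ, DifferentiableOn ℂ ψ V →
      HarmonicOn (fun y => (ψ (φ y)).re) (U ∩ φ ⁻¹' V) ∧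
      HarmonicOn (fun y => (ψ (φ y)).im) (U ∩ φ ⁻¹' V) := by
  have hφat : ∀ x ∈ U, ContDiffAt ℝ 2 φ x := fun x hx => hφ.contDiffAt (hU.mem_nhds hx)
  have hφd : ∀ x ∈ U, DifferentiableAt ℝ φ x := fun x hx =>
    (hφat x hx).differentiableAt (by norm_num)
  have hφk : ∀ k, ContDiffOn ℝ 2 (fun y => φ y k) U := fun k => contDiffOn_pi.1 hφ k
  have hΔk : ∀ x ∈ U, ∀ k, Δ (fun y => φ y k) x = Δ φ x k := fun x hx k =>
    (hφat x hx).laplacian_CLM_comp_left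
      (l := ContinuousLinearMap.proj (R := ℝ) (φ := fun _ : Fin n => ℂ) k)
  constructor
  · rintro ⟨-, hharm, hphwc⟩ V hV ψ hψ
    have hW : IsOpen (U ∩ φ ⁻¹' V) := hφ.continuousOn.isOpen_inter_preimage hU hV
    have hψ2 := contDiffOn_two_of_holo hV hψ
    have hcomp : ContDiffOn ℝ 2 (fun y => ψ (φ y)) (U ∩ φ ⁻¹' V) :=
      (hψ2.restrict_scalars ℝ).comp (hφ.mono Set.inter_subset_left) fun x hx => hx.2
    rw [harmonicOn_re_im_iff hW hcomp]
    rintro x ⟨hxU, hxV⟩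
    rw [laplacian_comp (hφat x hxU) (hψ2.contDiffAt (hV.mem_nhds hxV))]
    have h0 : Δ φ x = 0 := by
      ext1 k
      rw [← hΔk x hxU k]
      exact (harmonicOn_re_im_iff hU (hφk k)).1 (hharm k) x hxU
    have hp : ∀ A B, pairing φ x A B = 0 := fun A B =>
      (pairing_eq_zero_iff (hφd x hxU) A B).2 (hphwc A B x hxU)
    simp [h0, hp]
  · intro H
    -- Test functions `z_k` give harmonicity of the components.
    have hharm : ∀ k : Fin n, HarmonicOn (fun y => (φ y k).re) U ∧
        HarmonicOn (fun y => (φ y k).im) U := fun k => by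
      simpa using H Set.univ isOpen_univ (fun z => z k) (by fun_prop)
    refine ⟨hφ, hharm, fun A B x hx => ?_⟩
    rw [← pairing_eq_zero_iff (hφd x hx)]
    have h0 : Δ φ x = 0 := by
      ext1 k
      rw [← hΔk x hx k]
      exact (harmonicOn_re_im_iff hU (hφk k)).1 (hharm k) x hx
    -- The test function `z_A z_B` has constant Hessian and isolates `2 * pairing φ x A B`.
    have hAB := H Set.univ isOpen_univ (fun z => z A * z B) (by fun_prop)
    rw [Set.preimage_univ, Set.inter_univ,
      harmonicOn_re_im_iff hU ((hφk A).mul (hφk B))] at hAB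
    have hq := hAB x hx
    rw [laplacian_comp (ψ := fun z => z A * z B) (hφat x hx) (by fun_prop), h0, map_zero,
      zero_add] at hq
    have hf1 : fderiv ℂ (fun z : Fin n → ℂ => z A * z B) = fun z =>
        z A • ContinuousLinearMap.proj (R := ℂ) (φ := fun _ : Fin n => ℂ) B +
        z B • ContinuousLinearMap.proj (R := ℂ) (φ := fun _ : Fin n => ℂ) A := by
      ext1 z
      exact ((ContinuousLinearMap.proj (R := ℂ) (φ := fun _ : Fin n => ℂ) A).hasFDerivAt.mul
        (ContinuousLinearMap.proj (R := ℂ) (φ := fun _ : Fin n => ℂ) B).hasFDerivAt).fderiv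
    have hf2 : ∀ C D, fderiv ℂ (fderiv ℂ (fun z : Fin n → ℂ => z A * z B)) (φ x)
        (Pi.single C 1) (Pi.single D 1) =
        (Pi.single C 1 : Fin n → ℂ) A * (Pi.single D 1 : Fin n → ℂ) B +
        (Pi.single C 1 : Fin n → ℂ) B * (Pi.single D 1 : Fin n → ℂ) A := by
      intro C D
      have hsm : ∀ (k : Fin n) (L : (Fin n → ℂ) →L[ℂ] ℂ), HasFDerivAt
          (fun z : Fin n → ℂ => z k • L)
          ((ContinuousLinearMap.proj (R := ℂ) (φ := fun _ : Fin n => ℂ) k).smulRight L) (φ x) :=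
        fun k L => (ContinuousLinearMap.proj (R := ℂ) (φ := fun _ : Fin n => ℂ)
          k).hasFDerivAt.smul_const L
      rw [hf1, ((hsm A _).fun_add (hsm B _)).fderiv]
      simp
    have hsymm : pairing φ x B A = pairing φ x A B :=
      Finset.sum_congr rfl fun i _ => mul_comm _ _
    simpa [hf2, add_mul, Finset.sum_add_distrib, Pi.single_apply, hsymm] using hq
end

section
/- Let E be a finite-dimensional real inner product space, U ⊆ E a nonempty open set, φ : U → ℂⁿ a C² map with components φ^k = u^k + i v^k, V ⊆ ℂⁿ an open set with φ(U) ⊆ V, and ψ : V → ℂ a holomorphic function. Then for every x ∈ U: Δ(ψ∘φ)(x) = Σ_{k=1}^{n} (∂ψ/∂z_k)(φ(x)) · Δφ^k(x) + Σ_{k,l=1}^{n} (∂²ψ/∂z_k∂z_l)(φ(x)) · Q_{kl}(x), where Δ is the Laplacian applied separately to real and imaginary parts, Δφ^k := Δu^k + iΔv^k, ∂/∂z_k denotes the complex partial derivative, and Q_{kl}(x) := (⟨∇u^k(x), ∇u^l(x)⟩ − ⟨∇v^k(x), ∇v^l(x)⟩) + i(⟨∇u^k(x), ∇v^l(x)⟩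 + ⟨∇v^k(x), ∇u^l(x)⟩). -/
/-!
The identity is the second-order chain rule, summed over an orthonormal basis `b` of `E`.

* The Laplacian is `∑ᵢ ∂_{bᵢ} ∂_{bᵢ}`, for real functions (`lap_eq_sum_fderiv`) and, adding real and
  imaginary parts, for complex ones (`lap_re_add_lap_im`).
* Near `x`, `∂_b (ψ ∘ φ) = ∑ₖ (∂ₖψ ∘ φ) · ∂_b φᵏ`. Differentiating once more along `b` gives
  `∑ₖ ∂ₖψ(φ x) · ∂_b∂_b φᵏ + ∑ₖₗ ∂ₗ∂ₖψ(φ x) · ∂_b φˡ · ∂_b φᵏ`.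
* The complex bilinear expression `∑ᵢ ∂_{bᵢ}φᵏ · ∂_{bᵢ}φˡ` is `Qₖₗ`, by Parseval applied to the
  gradients of the real and imaginary parts (`sum_fderiv_mul_fderiv`).

The one analytic input is that `∂ₖψ` is again holomorphic (`differentiableAt_fderiv_apply_complex`).
It is obtained from the one-variable Cauchy formula along the complex line in the direction of
the derivative, differentiating under the integral sign; the Schwarz lemma provides the
bound on `fderiv ℂ ψ` which dominates the integrand.
-/

open scoped RealInnerProductSpace

open MeasureTheory Metric Set Filter Topology

/-- A directional derivative of a holomorphic function of several variables is
holomorphic. -/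
lemma differentiableAt_fderiv_apply_complex {n : ℕ} {V : Set (Fin n → ℂ)} (hV : IsOpen V)
    {ψ : (Fin n → ℂ) → ℂ} (hψ : DifferentiableOn ℂ ψ V) {z₀ : Fin n → ℂ} (hz₀ : z₀ ∈ V)
    (v : Fin n → ℂ) : DifferentiableAt ℂ (fun z => fderiv ℂ ψ z v) z₀ := by
  obtain ⟨ε, hε, hball⟩ : ∃ ε > 0, ∀ w ∈ ball z₀ (4 * ε), w ∈ V ∧ dist (ψ w) (ψ z₀) < 1 := by
    have h1 : ∀ᶠ w in 𝓝 z₀, w ∈ V ∧ dist (ψ w) (ψ z₀) < 1 :=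
      (hV.eventually_mem hz₀).and
        ((hψ.differentiableAt (hV.mem_nhds hz₀)).continuousAt.eventually
          (ball_mem_nhds _ one_pos))
    obtain ⟨δ, hδ, h⟩ := Metric.eventually_nhds_iff_ball.1 h1
    exact ⟨δ / 4, by positivity, fun w hw => h w (by simpa [mul_div_cancel₀] using hw)⟩
  have hdiff : ∀ w ∈ ball z₀ (4 * ε), DifferentiableAt ℂ ψ w := fun w hw =>
    hψ.differentiableAt (hV.mem_nhds (hball w hw).1)
  have hbound : ∀ c ∈ ball z₀ (2 * ε), ‖fderiv ℂ ψ c‖ ≤ 2 / (2 * ε) := by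
    intro c hc
    have hsub : ball c (2 * ε) ⊆ ball z₀ (4 * ε) :=
      ball_subset_ball' (by rw [mem_ball] at hc; linarith)
    refine Complex.norm_fderiv_le_div_of_mapsTo_ball
      (fun w hw => (hdiff w (hsub hw)).differentiableWithinAt) (fun w hw => ?_) (by positivity)
    have h1 := (hball w (hsub hw)).2
    have h2 := (hball c (hsub (mem_ball_self (by positivity)))).2
    rw [mem_closedBall]
    linarith [dist_triangle_right (ψ w) (ψ c) (ψ z₀)]
  -- The circle of radius `r` in direction `v` about a point of `ball z₀ ε` stays in
  -- `ball z₀ (2 * ε)`.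
  set r : ℝ := ε / (‖v‖ + 1) with hr
  have hr0 : 0 < r := by positivity
  have hrv : r * ‖v‖ < ε := by
    rw [hr, div_mul_eq_mul_div, div_lt_iff₀ (by positivity)]
    nlinarith
  have hmem : ∀ z ∈ ball z₀ ε, ∀ ζ : ℂ, ‖ζ‖ ≤ r → z + ζ • v ∈ ball z₀ (2 * ε) := by
    intro z hz ζ hζ
    rw [mem_ball, dist_eq_norm] at hz ⊢
    have h1 : ‖ζ • v‖ ≤ r * ‖v‖ := by rw [norm_smul]; gcongr
    calc ‖z + ζ • v - z₀‖ = ‖(z - z₀) + ζ • v‖ := by congr 1; abel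
      _ ≤ ‖z - z₀‖ + ‖ζ • v‖ := norm_add_le _ _
      _ < 2 * ε := by linarith
  have h24 : ball z₀ (2 * ε) ⊆ ball z₀ (4 * ε) := ball_subset_ball (by linarith)
  set a : ℝ → ℂ := fun θ => deriv (circleMap 0 r) θ * (1 / (circleMap 0 r θ - 0) ^ 2) with ha
  have hcm : ∀ θ, ‖circleMap 0 r θ‖ = r := fun θ => by simp [abs_of_pos hr0]
  have ha_norm : ∀ θ, ‖a θ‖ = r * (1 / r ^ 2) := fun θ => by
    simp [ha, abs_of_pos hr0]
  have ha_cont : Continuous a := by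
    have : ∀ θ, (circleMap 0 r θ - 0) ^ 2 ≠ 0 := fun θ => by
      simp [hr0.ne']
    simp only [ha, deriv_circleMap]
    exact ((continuous_circleMap 0 r).mul continuous_const).mul
      (continuous_const.div (((continuous_circleMap 0 r).sub continuous_const).pow 2) this)
  have hpath : ∀ z : Fin n → ℂ, Continuous fun θ : ℝ => z + circleMap 0 r θ • v := fun z =>
    continuous_const.add ((continuous_circleMap 0 r).smul continuous_const)
  set F : (Fin n → ℂ) → ℝ → ℂ := fun z θ => a θ * ψ (z + circleMap 0 r θ • v) with hF
  set F' : (Fin n → ℂ) → ℝ → ((Fin n → ℂ) →L[ℂ] ℂ) :=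
    fun z θ => a θ • fderiv ℂ ψ (z + circleMap 0 r θ • v) with hF'
  have hF_cont : ∀ z ∈ ball z₀ ε, Continuous (F z) := fun z hz =>
    ha_cont.mul (continuous_iff_continuousAt.2 fun θ =>
      ContinuousAt.comp (f := fun θ : ℝ => z + circleMap 0 r θ • v)
        (hdiff _ (h24 (hmem z hz _ (hcm θ).le))).continuousAt (hpath z).continuousAt)
  have hcauchy : ∀ z ∈ ball z₀ ε,
      ∫ θ in Ioc 0 (2 * Real.pi), F z θ = (2 * Real.pi * Complex.I) * fderiv ℂ ψ z v := by
    intro z hz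
    have hline : ∀ ζ : ℂ, HasDerivAt (fun ζ : ℂ => z + ζ • v) v ζ := fun ζ => by
      simpa using ((hasDerivAt_id ζ).smul_const v).const_add z
    have hd : ∀ ζ : ℂ, ‖ζ‖ ≤ r →
        HasDerivAt (fun ζ : ℂ => ψ (z + ζ • v)) (fderiv ℂ ψ (z + ζ • v) v) ζ := fun ζ hζ =>
      (hdiff _ (h24 (hmem z hz ζ hζ))).hasFDerivAt.comp_hasDerivAt ζ (hline ζ)
    have h := DifferentiableOn.deriv_eq_smul_circleIntegral (c := 0)
      (f := fun ζ : ℂ => ψ (z + ζ • v)) hr0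
      (fun ζ hζ => (hd ζ (by simpa using hζ)).differentiableAt.differentiableWithinAt)
    rw [(hd 0 (by simpa using hr0.le)).deriv, circleIntegral,
      intervalIntegral.integral_of_le (by positivity)] at h
    simpa [hF, ha, mul_assoc] using h
  have hmain : HasFDerivAt (fun z => ∫ θ in Ioc 0 (2 * Real.pi), F z θ)
      (∫ θ in Ioc 0 (2 * Real.pi), F' z₀ θ) z₀ := by
    refine hasFDerivAt_integral_of_dominated_of_fderiv_le (ball_mem_nhds z₀ hε)
      (bound := fun _ => r * (1 / r ^ 2) * (2 / (2 * ε))) ?_ ?_ ?_ ?_ ?_ ?_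
    · filter_upwards [ball_mem_nhds z₀ hε] with z hz
      exact (hF_cont z hz).aestronglyMeasurable
    · exact ((hF_cont z₀ (mem_ball_self hε)).integrableOn_Icc).mono_set Ioc_subset_Icc_self
    · exact (ha_cont.measurable.smul
        ((measurable_fderiv ℂ ψ).comp (hpath z₀).measurable)).aestronglyMeasurable
    · refine ae_of_all _ fun θ z hz => ?_
      rw [hF', norm_smul, ha_norm]
      gcongr
      exact hbound _ (hmem z hz _ (hcm θ).le)
    · exact integrable_const _
    · refine ae_of_all _ fun θ z hz => ?_
      have h1 := (hdiff _ (h24 (hmem z hz _ (hcm θ).le))).hasFDerivAt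
      have h2 : HasFDerivAt (fun z : Fin n → ℂ => z + circleMap 0 r θ • v)
          (ContinuousLinearMap.id ℂ _) z := (hasFDerivAt_id z).add_const _
      simpa [hF, hF'] using (h1.comp z h2).const_mul (a θ)
  have heq : (fun z => fderiv ℂ ψ z v) =ᶠ[𝓝 z₀]
      fun z => (2 * Real.pi * Complex.I)⁻¹ * ∫ θ in Ioc 0 (2 * Real.pi), F z θ := by
    filter_upwards [ball_mem_nhds z₀ hε] with z hz
    rw [hcauchy z hz, inv_mul_cancel_left₀ Complex.two_pi_I_ne_zero]
  exact heq.differentiableAt_iff.2 (hmain.differentiableAt.const_mul _)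

section Laplacian

variable {E : Type*} [NormedAddCommGroup E] [InnerProductSpace ℝ E] [FiniteDimensional ℝ E]
  {ι : Type*} [Fintype ι]

/-- The Laplacian as a sum of second directional derivatives. -/
lemma lap_eq_sum_fderiv (b : OrthonormalBasis ι ℝ E) {f : E → ℝ} {x : E}
    (hf : ∀ v, DifferentiableAt ℝ (fun y => fderiv ℝ f y v) x) :
    lap f x = ∑ i, fderiv ℝ (fun y => fderiv ℝ f y (b i)) x (b i) := by
  have hgrad : gradient f = fun y => ∑ i, fderiv ℝ f y (b i) • b i := by
    ext1 y
    rw [← b.sum_repr' (gradient f y)]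
    simp [inner_gradient_right]
  have hd : DifferentiableAt ℝ (gradient f) x := by
    rw [hgrad]
    exact DifferentiableAt.fun_sum fun i _ => (hf (b i)).smul_const _
  rw [lap, LinearMap.trace_eq_sum_inner _ b]
  refine Finset.sum_congr rfl fun i _ => ?_
  have h1 : (fun y => fderiv ℝ f y (b i)) = fun y => innerSL ℝ (b i) (gradient f y) := by
    ext y
    simp [inner_gradient_right]
  rw [h1]
  have := ((innerSL ℝ (b i)).hasFDerivAt.comp x hd.hasFDerivAt).fderiv
  simp only [Function.comp_def] at this
  rw [this]
  rfl

/-- The Laplacian of a complex-valued function, taken on real and imaginary parts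
separately, as a sum of second directional derivatives. -/
lemma lap_re_add_lap_im (b : OrthonormalBasis ι ℝ E) {g : E → ℂ} {x : E}
    (hg : ∀ᶠ y in 𝓝 x, DifferentiableAt ℝ g y)
    (hg' : ∀ v, DifferentiableAt ℝ (fun y => fderiv ℝ g y v) x) :
    (lap (fun y => (g y).re) x : ℂ) + (lap (fun y => (g y).im) x : ℂ) * Complex.I =
      ∑ i, fderiv ℝ (fun y => fderiv ℝ g y (b i)) x (b i) := by
  have key : ∀ L : ℂ →L[ℝ] ℝ, lap (fun y => L (g y)) x =
      ∑ i, L (fderiv ℝ (fun y => fderiv ℝ g y (b i)) x (b i)) := by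
    intro L
    have h1 : ∀ v, (fun y => fderiv ℝ (fun y => L (g y)) y v) =ᶠ[𝓝 x]
        fun y => L (fderiv ℝ g y v) := fun v => by
      filter_upwards [hg] with y hy
      have := (L.hasFDerivAt.comp y hy.hasFDerivAt).fderiv
      simp only [Function.comp_def] at this
      rw [this]
      rfl
    rw [lap_eq_sum_fderiv b fun v =>
      (h1 v).differentiableAt_iff.2 (L.differentiableAt.comp x (hg' v))]
    refine Finset.sum_congr rfl fun i _ => ?_
    have := (L.hasFDerivAt.comp x (hg' (b i)).hasFDerivAt).fderiv
    simp only [Function.comp_def] at this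
    rw [(h1 (b i)).fderiv_eq, this]
    rfl
  have hre := key Complex.reCLM
  have him := key Complex.imCLM
  simp only [Complex.reCLM_apply, Complex.imCLM_apply] at hre him
  rw [hre, him]
  simp [Complex.ext_iff]

/-- Parseval for the complex bilinear extension of the inner product: the sum over an orthonormal
basis of products of directional derivatives of `f = u + iv` and `g = u' + iv'`, in terms of the
gradients of `u`, `v`, `u'`, `v'`. -/
lemma sum_fderiv_mul_fderiv (b : OrthonormalBasis ι ℝ E) {f g : E → ℂ} {x : E}
    (hf : DifferentiableAt ℝ f x) (hg : DifferentiableAt ℝ g x) :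
    ∑ i, fderiv ℝ f x (b i) * fderiv ℝ g x (b i) =
      ((⟪gradient (fun y => (f y).re) x, gradient (fun y => (g y).re) x⟫ -
          ⟪gradient (fun y => (f y).im) x, gradient (fun y => (g y).im) x⟫ : ℝ) : ℂ) +
        ((⟪gradient (fun y => (f y).re) x, gradient (fun y => (g y).im) x⟫ +
          ⟪gradient (fun y => (f y).im) x, gradient (fun y => (g y).re) x⟫ : ℝ) : ℂ) *
          Complex.I := by
  have hinner : ∀ u w : E → ℝ, ⟪gradient u x, gradient w x⟫ =
      ∑ i, fderiv ℝ u x (b i) * fderiv ℝ w x (b i) := fun u w => by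
    rw [← b.sum_inner_mul_inner]
    simp [inner_gradient_right, inner_gradient_left]
  have hre : ∀ {h : E → ℂ}, DifferentiableAt ℝ h x → ∀ v,
      fderiv ℝ (fun y => (h y).re) x v = (fderiv ℝ h x v).re := fun hh v => by
    have := (Complex.reCLM.hasFDerivAt.comp x hh.hasFDerivAt).fderiv
    simp only [Function.comp_def, Complex.reCLM_apply] at this
    rw [this]
    rfl
  have him : ∀ {h : E → ℂ}, DifferentiableAt ℝ h x → ∀ v,
      fderiv ℝ (fun y => (h y).im) x v = (fderiv ℝ h x v).im := fun hh v => by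
    have := (Complex.imCLM.hasFDerivAt.comp x hh.hasFDerivAt).fderiv
    simp only [Function.comp_def, Complex.imCLM_apply] at this
    rw [this]
    rfl
  simp only [hinner, hre hf, hre hg, him hf, him hg]
  simp [Complex.ext_iff, Finset.sum_sub_distrib, Finset.sum_add_distrib]

end Laplacian

/-- The chain-rule identity for the Laplacian of the composition of a `C²` map
`φ : U → ℂⁿ` with a holomorphic function `ψ` defined on an open set containing `φ(U)`:
`Δ(ψ∘φ) = Σₖ (∂ψ/∂zₖ)(φ) Δφᵏ + Σₖₗ (∂²ψ/∂zₖ∂zₗ)(φ) Qₖₗ`, where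
`Qₖₗ = (⟨∇uᵏ,∇uˡ⟩ − ⟨∇vᵏ,∇vˡ⟩) + i(⟨∇uᵏ,∇vˡ⟩ + ⟨∇vᵏ,∇uˡ⟩)`. -/
theorem lap_comp_holom {E : Type*} [NormedAddCommGroup E]
    [InnerProductSpace ℝ E] [FiniteDimensional ℝ E] {n : ℕ}
    (U : Set E) (hU : IsOpen U) (hUne : U.Nonempty)
    (φ : E → (Fin n → ℂ)) (hφ : ContDiffOn ℝ 2 φ U)
    (V : Set (Fin n → ℂ)) (hV : IsOpen V) (hmaps : Set.MapsTo φ U V)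
    (ψ : (Fin n → ℂ) → ℂ) (hψ : DifferentiableOn ℂ ψ V)
    (x : E) (hx : x ∈ U) :
    (lap (fun y => (ψ (φ y)).re) x : ℂ) + (lap (fun y => (ψ (φ y)).im) x : ℂ) * Complex.I =
    (∑ k : Fin n, fderiv ℂ ψ (φ x) (Pi.single k 1) *
      ((lap (fun y => (φ y k).re) x : ℂ) + (lap (fun y => (φ y k).im) x : ℂ) * Complex.I)) +
    ∑ k : Fin n, ∑ l : Fin n,
      fderiv ℂ (fun z => fderiv ℂ ψ z (Pi.single k 1)) (φ x) (Pi.single l 1) *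
      (((⟪gradient (fun y => (φ y k).re) x, gradient (fun y => (φ y l).re) x⟫ -
          ⟪gradient (fun y => (φ y k).im) x, gradient (fun y => (φ y l).im) x⟫ : ℝ) : ℂ) +
        ((⟪gradient (fun y => (φ y k).re) x, gradient (fun y => (φ y l).im) x⟫ +
          ⟪gradient (fun y => (φ y k).im) x, gradient (fun y => (φ y l).re) x⟫ : ℝ) : ℂ) *
          Complex.I) := by
  classical
  let b := stdOrthonormalBasis ℝ E
  have hφx : ContDiffAt ℝ 2 φ x := hφ.contDiffAt (hU.mem_nhds hx)
  have hφd : ∀ y ∈ U, DifferentiableAt ℝ φ y := fun y hy =>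
    (hφ.contDiffAt (hU.mem_nhds hy)).differentiableAt (by norm_num)
  have hφk : ∀ k, ∀ y ∈ U, HasFDerivAt (fun y => φ y k)
      ((ContinuousLinearMap.proj k).comp (fderiv ℝ φ y)) y := fun k y hy =>
    hasFDerivAt_pi'.1 (hφd y hy).hasFDerivAt k
  have hφk2 : ∀ k v, DifferentiableAt ℝ (fun y => fderiv ℝ (fun y => φ y k) y v) x := by
    intro k v
    have h1 : ContDiffAt ℝ 2 (fun y => φ y k) x := contDiffAt_pi.1 hφx k
    exact ((h1.fderiv_right (m := 1) (by norm_num)).differentiableAt (by norm_num)).clm_apply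
      (differentiableAt_const v)
  -- The real chain rule for a function holomorphic at `φ y`, in coordinates.
  have hchain : ∀ (p : (Fin n → ℂ) → ℂ), ∀ y ∈ U, DifferentiableAt ℂ p (φ y) →
      DifferentiableAt ℝ (fun y => p (φ y)) y ∧ ∀ v, fderiv ℝ (fun y => p (φ y)) y v =
        ∑ k, fderiv ℂ p (φ y) (Pi.single k 1) * fderiv ℝ (fun y => φ y k) y v := by
    intro p y hy hp
    have h := (hp.hasFDerivAt.restrictScalars ℝ).comp y (hφd y hy).hasFDerivAt
    simp only [Function.comp_def] at h
    refine ⟨h.differentiableAt, fun v => ?_⟩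
    rw [h.fderiv]
    simp only [(hφk _ y hy).fderiv]
    simp only [ContinuousLinearMap.comp_apply, ContinuousLinearMap.coe_restrictScalars',
      ContinuousLinearMap.proj_apply]
    conv_lhs => rw [pi_eq_sum_univ' (fderiv ℝ φ y v), map_sum]
    refine Finset.sum_congr rfl fun k _ => ?_
    rw [map_smul, smul_eq_mul, mul_comm]
  have hψd : ∀ y ∈ U, DifferentiableAt ℂ ψ (φ y) := fun y hy =>
    hψ.differentiableAt (hV.mem_nhds (hmaps hy))
  have hψ2 : ∀ k, DifferentiableAt ℂ (fun z => fderiv ℂ ψ z (Pi.single k 1)) (φ x) := fun k =>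
    differentiableAt_fderiv_apply_complex hV hψ (hmaps hx) _
  have hfirst : ∀ v, (fun y => fderiv ℝ (fun y => ψ (φ y)) y v) =ᶠ[𝓝 x] fun y =>
      ∑ k, fderiv ℂ ψ (φ y) (Pi.single k 1) * fderiv ℝ (fun y => φ y k) y v := fun v => by
    filter_upwards [hU.mem_nhds hx] with y hy
    exact (hchain ψ y hy (hψd y hy)).2 v
  have hterm : ∀ v k, HasFDerivAt
      (fun y => fderiv ℂ ψ (φ y) (Pi.single k 1) * fderiv ℝ (fun y => φ y k) y v) _ x :=
    fun v k => (hchain _ x hx (hψ2 k)).1.hasFDerivAt.mul (hφk2 k v).hasFDerivAt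
  have hsum := fun v => HasFDerivAt.fun_sum (u := Finset.univ) fun k _ => hterm v k
  rw [lap_re_add_lap_im b
    (by filter_upwards [hU.mem_nhds hx] with y hy using (hchain ψ y hy (hψd y hy)).1)
    (fun v => (hfirst v).differentiableAt_iff.2 (hsum v).differentiableAt)]
  have hlapφ : ∀ k, (lap (fun y => (φ y k).re) x : ℂ) +
      (lap (fun y => (φ y k).im) x : ℂ) * Complex.I =
      ∑ i, fderiv ℝ (fun y => fderiv ℝ (fun y => φ y k) y (b i)) x (b i) := fun k =>
    lap_re_add_lap_im b
      (by filter_upwards [hU.mem_nhds hx] with y hy using (hφk k y hy).differentiableAt) (hφk2 k)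
  simp only [hlapφ, ← sum_fderiv_mul_fderiv b (hφk _ x hx).differentiableAt
    (hφk _ x hx).differentiableAt]
  have hsecond : ∀ i, fderiv ℝ (fun y => fderiv ℝ (fun y => ψ (φ y)) y (b i)) x (b i) =
      (∑ k, fderiv ℂ ψ (φ x) (Pi.single k 1) *
        fderiv ℝ (fun y => fderiv ℝ (fun y => φ y k) y (b i)) x (b i)) +
      ∑ k, ∑ l, fderiv ℂ (fun z => fderiv ℂ ψ z (Pi.single k 1)) (φ x) (Pi.single l 1) *
        (fderiv ℝ (fun y => φ y k) x (b i) * fderiv ℝ (fun y => φ y l) x (b i)) := by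
    intro i
    rw [(hfirst (b i)).fderiv_eq, (hsum (b i)).fderiv, ← Finset.sum_add_distrib]
    simp only [_root_.sum_apply]
    refine Finset.sum_congr rfl fun k _ => ?_
    simp only [_root_.add_apply, _root_.smul_apply, smul_eq_mul,
      (hchain _ x hx (hψ2 k)).2, Finset.mul_sum]
    congr 1
    exact Finset.sum_congr rfl fun l _ => by ring
  simp only [hsecond, Finset.sum_add_distrib, Finset.mul_sum]
  congr 1
  · exact Finset.sum_comm
  · rw [Finset.sum_comm]
    exact Finset.sum_congr rfl fun k _ => Finset.sum_comm
end

section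
/- Let E be a finite-dimensional real inner product space, U ⊆ E a nonempty open set, and φ : U → ℂⁿ a C² map such that for every open set V ⊆ ℂⁿ and every harmonic function h : V → ℝ (where ℂⁿ is identified with the Euclidean space ℝ^{2n}), the function h∘φ is harmonic on φ⁻¹(V). Then φ is a pseudo harmonic morphism, i.e. φ is harmonic and pseudo-horizontally weakly conformal. -/
/-!
The coordinate functions `Re z_A`, `Im z_A` and the real and imaginary parts of `z_A z_B` are
harmonic on all of `ℂⁿ`, so their pullbacks by `φ` are harmonic on `U`. The coordinates give the
harmonicity of `φ`. For the quadratic functions, the Leibniz rule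
`Δ(fg) = f Δg + g Δf + 2⟪∇f, ∇g⟫` (`lap_mul`) together with the harmonicity of the components of
`φ` reduces `Δ(Re(φ_A φ_B)) = 0` and `Δ(Im(φ_A φ_B)) = 0` to the two PHWC equations. The same
Leibniz rule, applied on `ℂⁿ` to the real-linear coordinates, shows that the quadratic functions
are harmonic there.
-/

open scoped RealInnerProductSpace

/-- Pseudo-horizontally weakly conformal map into `ℂⁿ` (as the Euclidean space
`EuclideanSpace ℂ (Fin n) ≅ ℝ^{2n}`), on a set `U`. -/
def PHWCOnE {E : Type*} [NormedAddCommGroup E] [InnerProductSpace ℝ E] [CompleteSpace E]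
    {n : ℕ} (φ : E → EuclideanSpace ℂ (Fin n)) (U : Set E) : Prop :=
  ∀ A B : Fin n, ∀ x ∈ U,
    ⟪gradient (fun y => (φ y A).re) x, gradient (fun y => (φ y B).re) x⟫ -
      ⟪gradient (fun y => (φ y A).im) x, gradient (fun y => (φ y B).im) x⟫ = 0 ∧
    ⟪gradient (fun y => (φ y A).im) x, gradient (fun y => (φ y B).re) x⟫ +
      ⟪gradient (fun y => (φ y A).re) x, gradient (fun y => (φ y B).im) x⟫ = 0

lemma ContDiffAt.eventually_differentiableAt_of_two {E : Type*} [NormedAddCommGroup E]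
    [NormedSpace ℝ E] {f : E → ℝ} {x : E} (hf : ContDiffAt ℝ 2 f x) :
    ∀ᶠ y in nhds x, DifferentiableAt ℝ f y :=
  (hf.eventually (by simp)).mono fun _ hy => hy.differentiableAt (by norm_num)

section Laplacian

variable {E : Type*} [NormedAddCommGroup E] [InnerProductSpace ℝ E] [FiniteDimensional ℝ E]
  {f g : E → ℝ} {x : E}

lemma ContDiffAt.differentiableAt_gradient (hf : ContDiffAt ℝ 2 f x) :
    DifferentiableAt ℝ (gradient f) x := by
  have h1 : DifferentiableAt ℝ (fderiv ℝ f) x :=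
    (hf.fderiv_right (m := 1) (by norm_num)).differentiableAt (by norm_num)
  exact ((InnerProductSpace.toDual ℝ E).symm.toContinuousLinearEquiv.differentiableAt).comp x h1

lemma lap_add (hf : ContDiffAt ℝ 2 f x) (hg : ContDiffAt ℝ 2 g x) :
    lap (fun y => f y + g y) x = lap f x + lap g x := by
  have key : gradient (fun y => f y + g y) =ᶠ[nhds x] gradient f + gradient g := by
    filter_upwards [hf.eventually_differentiableAt_of_two,
      hg.eventually_differentiableAt_of_two] with y hfy hgy
    simp only [gradient, Pi.add_apply]
    rw [fderiv_fun_add hfy hgy, map_add]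
  simp only [lap]
  rw [key.fderiv_eq, fderiv_add hf.differentiableAt_gradient hg.differentiableAt_gradient]
  simp

lemma lap_sub (hf : ContDiffAt ℝ 2 f x) (hg : ContDiffAt ℝ 2 g x) :
    lap (fun y => f y - g y) x = lap f x - lap g x := by
  have key : gradient (fun y => f y - g y) =ᶠ[nhds x] gradient f - gradient g := by
    filter_upwards [hf.eventually_differentiableAt_of_two,
      hg.eventually_differentiableAt_of_two] with y hfy hgy
    simp only [gradient, Pi.sub_apply]
    rw [fderiv_fun_sub hfy hgy, map_sub]
  simp only [lap]
  rw [key.fderiv_eq, fderiv_sub hf.differentiableAt_gradient hg.differentiableAt_gradient]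
  simp

/-- Leibniz rule for the Laplacian. The cross terms are traces of rank-one operators
`⟪∇f, ·⟫ ∇g`. -/
lemma lap_mul (hf : ContDiffAt ℝ 2 f x) (hg : ContDiffAt ℝ 2 g x) :
    lap (fun y => f y * g y) x =
      f x * lap g x + g x * lap f x + 2 * ⟪gradient f x, gradient g x⟫ := by
  have key : gradient (fun y => f y * g y) =ᶠ[nhds x] f • gradient g + g • gradient f := by
    filter_upwards [hf.eventually_differentiableAt_of_two,
      hg.eventually_differentiableAt_of_two] with y hfy hgy
    simp only [gradient, Pi.add_apply, Pi.smul_apply']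
    rw [fderiv_fun_mul hfy hgy, map_add]
    simp
  have hfd : DifferentiableAt ℝ f x := hf.differentiableAt (by norm_num)
  have hgd : DifferentiableAt ℝ g x := hg.differentiableAt (by norm_num)
  have hder := (hfd.hasFDerivAt.smul hg.differentiableAt_gradient.hasFDerivAt).add
    (hgd.hasFDerivAt.smul hf.differentiableAt_gradient.hasFDerivAt)
  have e1 : fderiv ℝ f x (gradient g x) = ⟪gradient f x, gradient g x⟫ := by
    rw [← toDual_gradient, InnerProductSpace.toDual_apply_apply]
  have e2 : fderiv ℝ g x (gradient f x) = ⟪gradient f x, gradient g x⟫ := by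
    rw [← toDual_gradient, InnerProductSpace.toDual_apply_apply, real_inner_comm]
  have t (l : E →L[ℝ] ℝ) (v : E) :
      LinearMap.trace ℝ E (l.smulRight v : E →L[ℝ] E).toLinearMap = l v :=
    LinearMap.trace_smulRight (l : E →ₗ[ℝ] ℝ) v
  simp only [lap]
  rw [key.fderiv_eq, hder.fderiv]
  simp only [ContinuousLinearMap.toLinearMap_add, ContinuousLinearMap.toLinearMap_smul, map_add,
    map_smul, t, e1, e2, smul_eq_mul]
  ring

lemma gradient_inner_left (v : E) : gradient (fun y : E => ⟪v, y⟫) = fun _ => v :=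
  gradient_eq fun _ => (InnerProductSpace.toDual ℝ E v).hasFDerivAt

lemma lap_inner_left (v : E) : lap (fun y : E => ⟪v, y⟫) x = 0 := by
  simp [lap, gradient_inner_left]

end Laplacian

section Coordinates

variable {n : ℕ}

lemma re_coord_eq_inner (A : Fin n) :
    (fun z : EuclideanSpace ℂ (Fin n) => (z A).re) =
      fun z => ⟪(EuclideanSpace.single A (1 : ℂ) : EuclideanSpace ℂ (Fin n)), z⟫ := by
  ext z
  simp [PiLp.inner_apply, Complex.inner, apply_ite]

lemma im_coord_eq_inner (A : Fin n) :
    (fun z : EuclideanSpace ℂ (Fin n) => (z A).im) =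
      fun z => ⟪(EuclideanSpace.single A Complex.I : EuclideanSpace ℂ (Fin n)), z⟫ := by
  ext z
  simp [PiLp.inner_apply, Complex.inner, apply_ite]

lemma contDiff_re_coord (A : Fin n) :
    ContDiff ℝ 2 (fun z : EuclideanSpace ℂ (Fin n) => (z A).re) := by
  rw [re_coord_eq_inner]
  exact contDiff_const.inner ℝ contDiff_id

lemma contDiff_im_coord (A : Fin n) :
    ContDiff ℝ 2 (fun z : EuclideanSpace ℂ (Fin n) => (z A).im) := by
  rw [im_coord_eq_inner]
  exact contDiff_const.inner ℝ contDiff_id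

lemma lap_re_coord (A : Fin n) (z : EuclideanSpace ℂ (Fin n)) :
    lap (fun z : EuclideanSpace ℂ (Fin n) => (z A).re) z = 0 := by
  rw [re_coord_eq_inner, lap_inner_left]

lemma lap_im_coord (A : Fin n) (z : EuclideanSpace ℂ (Fin n)) :
    lap (fun z : EuclideanSpace ℂ (Fin n) => (z A).im) z = 0 := by
  rw [im_coord_eq_inner, lap_inner_left]

/-- `Re (z_A z_B)` is harmonic on `ℂⁿ`. -/
lemma harmonicOn_re_mul (A B : Fin n) :
    HarmonicOn (fun z : EuclideanSpace ℂ (Fin n) =>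
      (z A).re * (z B).re - (z A).im * (z B).im) Set.univ := by
  have rA := contDiff_re_coord A
  have rB := contDiff_re_coord B
  have iA := contDiff_im_coord A
  have iB := contDiff_im_coord B
  refine ⟨((rA.mul rB).sub (iA.mul iB)).contDiffOn, fun z _ => ?_⟩
  rw [lap_sub (rA.mul rB).contDiffAt (iA.mul iB).contDiffAt,
    lap_mul rA.contDiffAt rB.contDiffAt, lap_mul iA.contDiffAt iB.contDiffAt]
  simp only [lap_re_coord, lap_im_coord]
  simp only [re_coord_eq_inner, im_coord_eq_inner, gradient_inner_left]
  have e1 := congrFun (re_coord_eq_inner A) (EuclideanSpace.single B 1)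
  have e2 := congrFun (im_coord_eq_inner A) (EuclideanSpace.single B Complex.I)
  beta_reduce at e1 e2
  rw [← e1, ← e2]
  by_cases hAB : A = B <;> simp [hAB]

/-- `Im (z_A z_B)` is harmonic on `ℂⁿ`. -/
lemma harmonicOn_im_mul (A B : Fin n) :
    HarmonicOn (fun z : EuclideanSpace ℂ (Fin n) =>
      (z A).im * (z B).re + (z A).re * (z B).im) Set.univ := by
  have rA := contDiff_re_coord A
  have rB := contDiff_re_coord B
  have iA := contDiff_im_coord A
  have iB := contDiff_im_coord B
  refine ⟨((iA.mul rB).add (rA.mul iB)).contDiffOn, fun z _ => ?_⟩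
  rw [lap_add (iA.mul rB).contDiffAt (rA.mul iB).contDiffAt,
    lap_mul iA.contDiffAt rB.contDiffAt, lap_mul rA.contDiffAt iB.contDiffAt]
  simp only [lap_re_coord, lap_im_coord]
  simp only [re_coord_eq_inner, im_coord_eq_inner, gradient_inner_left]
  have e1 := congrFun (im_coord_eq_inner A) (EuclideanSpace.single B 1)
  have e2 := congrFun (re_coord_eq_inner A) (EuclideanSpace.single B Complex.I)
  beta_reduce at e1 e2
  rw [← e1, ← e2]
  by_cases hAB : A = B <;> simp [hAB]

end Coordinates

/-- Every `C²` harmonic morphism (a map pulling back harmonic functions on open subsets of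
`ℂⁿ ≅ ℝ^{2n}` to harmonic functions) with values in the flat Kähler manifold `ℂⁿ` is a
pseudo harmonic morphism: it is harmonic and pseudo-horizontally weakly conformal. -/
theorem harmonic_morphism_is_phm {E : Type*} [NormedAddCommGroup E]
    [InnerProductSpace ℝ E] [FiniteDimensional ℝ E] {n : ℕ}
    (U : Set E) (hU : IsOpen U) (hUne : U.Nonempty)
    (φ : E → EuclideanSpace ℂ (Fin n)) (hφ : ContDiffOn ℝ 2 φ U)
    (hmor : ∀ V : Set (EuclideanSpace ℂ (Fin n)), IsOpen V →
      ∀ h : EuclideanSpace ℂ (Fin n) → ℝ, HarmonicOn h V →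
        HarmonicOn (fun y => h (φ y)) (U ∩ φ ⁻¹' V)) :
    (∀ k : Fin n, HarmonicOn (fun y => (φ y k).re) U ∧ HarmonicOn (fun y => (φ y k).im) U) ∧
    PHWCOnE φ U := by
  have pull (h : EuclideanSpace ℂ (Fin n) → ℝ) (hh : HarmonicOn h Set.univ) :
      HarmonicOn (fun y => h (φ y)) U := by
    simpa using hmor Set.univ isOpen_univ h hh
  have hre (k : Fin n) : HarmonicOn (fun y => (φ y k).re) U :=
    pull _ ⟨(contDiff_re_coord k).contDiffOn, fun z _ => lap_re_coord k z⟩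
  have him (k : Fin n) : HarmonicOn (fun y => (φ y k).im) U :=
    pull _ ⟨(contDiff_im_coord k).contDiffOn, fun z _ => lap_im_coord k z⟩
  refine ⟨fun k => ⟨hre k, him k⟩, fun A B x hx => ?_⟩
  have cre (k : Fin n) : ContDiffAt ℝ 2 (fun y => (φ y k).re) x :=
    (hre k).1.contDiffAt (hU.mem_nhds hx)
  have cim (k : Fin n) : ContDiffAt ℝ 2 (fun y => (φ y k).im) x :=
    (him k).1.contDiffAt (hU.mem_nhds hx)
  constructor
  · have h := (pull _ (harmonicOn_re_mul A B)).2 x hx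
    rw [lap_sub ((cre A).mul (cre B)) ((cim A).mul (cim B)), lap_mul (cre A) (cre B),
      lap_mul (cim A) (cim B), (hre A).2 x hx, (hre B).2 x hx, (him A).2 x hx,
      (him B).2 x hx] at h
    linarith
  · have h := (pull _ (harmonicOn_im_mul A B)).2 x hx
    rw [lap_add ((cim A).mul (cre B)) ((cre A).mul (cim B)), lap_mul (cim A) (cre B),
      lap_mul (cre A) (cim B), (hre A).2 x hx, (hre B).2 x hx, (him A).2 x hx,
      (him B).2 x hx] at h
    linarith
end

section
/- Let E be a finite-dimensional real inner product space, U ⊆ E a nonempty open set, and φ : U → ℂⁿ a differentiable map with components φ^k (k = 1,…,n). Suppose that for all k, l ∈ {1,…,n} the ℂ-valued function φ^k + φ^l is pseudo-horizontally weakly conformal, i.e. writing φ^k + φ^l = w₁ + i w₂ one has ‖∇w₁(x)‖² = ‖∇w₂(x)‖² and ⟨∇w₁(x), ∇w₂(x)⟩ = 0 for all x ∈ U. Then φ is pseudo-horizontally weakly conformal. -/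
/-! Let `Q(f, g) = ⟨∇f, ∇g⟩`, extended complex-bilinearly to complex-valued functions. The
hypothesis says that `Q(f, f) = 0` for `f = φᵏ + φˡ` (real part: equal norms, imaginary part:
orthogonality). Taking `k = l` gives `Q(φᵏ, φᵏ) = 0`, and polarization then yields
`Q(φᵏ, φˡ) = 0`, whose real and imaginary parts are the conditions to be proved. -/

open scoped RealInnerProductSpace

theorem gradient_fun_add {E : Type*} [NormedAddCommGroup E] [InnerProductSpace ℝ E]
    [CompleteSpace E] {f g : E → ℝ} {x : E} (hf : DifferentiableAt ℝ f x)
    (hg : DifferentiableAt ℝ g x) :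
    gradient (fun y => f y + g y) x = gradient f x + gradient g x := by
  simp only [gradient, fderiv_fun_add hf hg, map_add]

/-- If for all indices `k, l` the complex-valued function `φᵏ + φˡ` is
pseudo-horizontally weakly conformal on `U`, then the differentiable map
`φ : U → ℂⁿ` is pseudo-horizontally weakly conformal on `U`. -/
theorem phwc_of_sums_of_components_phwc {E : Type*} [NormedAddCommGroup E]
    [InnerProductSpace ℝ E] [FiniteDimensional ℝ E] {n : ℕ}
    (U : Set E) (hU : IsOpen U) (hUne : U.Nonempty)
    (φ : E → (Fin n → ℂ)) (hφ : DifferentiableOn ℝ φ U)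
    (hsum : ∀ k l : Fin n, ∀ x ∈ U,
      ‖gradient (fun y => (φ y k + φ y l).re) x‖ ^ 2 =
        ‖gradient (fun y => (φ y k + φ y l).im) x‖ ^ 2 ∧
      ⟪gradient (fun y => (φ y k + φ y l).re) x,
        gradient (fun y => (φ y k + φ y l).im) x⟫ = 0) :
    PHWCOn φ U := by
  intro A B x hx
  have hd : ∀ k, DifferentiableAt ℝ (fun y => φ y k) x := fun k =>
    differentiableAt_pi.1 ((hφ x hx).differentiableAt (hU.mem_nhds hx)) k
  have hre : ∀ k, DifferentiableAt ℝ (fun y => (φ y k).re) x := fun k =>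
    Complex.reCLM.differentiableAt.comp x (hd k)
  have him : ∀ k, DifferentiableAt ℝ (fun y => (φ y k).im) x := fun k =>
    Complex.imCLM.differentiableAt.comp x (hd k)
  have key := fun k l => hsum k l x hx
  simp only [Complex.add_re, Complex.add_im, gradient_fun_add (hre _) (hre _),
    gradient_fun_add (him _) (him _), ← real_inner_self_eq_norm_sq, inner_add_left,
    inner_add_right] at key
  obtain ⟨hAA, hAA'⟩ := key A A
  obtain ⟨hBB, hBB'⟩ := key B B
  obtain ⟨hAB, hAB'⟩ := key A B
  rw [real_inner_comm (gradient (fun y => (φ y A).re) x) (gradient (fun y => (φ y B).re) x),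
    real_inner_comm (gradient (fun y => (φ y A).im) x) (gradient (fun y => (φ y B).im) x)] at hAB
  rw [real_inner_comm (gradient (fun y => (φ y B).re) x) (gradient (fun y => (φ y A).im) x)]
  constructor <;> linarith
end

section
/- Let U ⊆ ℂᵏ and V ⊆ ℂˢ be nonempty open sets, r ≥ 1 an integer, and for each i = 1,…,r let f_i : U → ℂ and g_i : V → ℂ be holomorphic functions. Then the map η : U × V → ℂʳ defined by η(u, v) = (f_1(u)·conj(g_1(v)), …, f_r(u)·conj(g_r(v))), where U × V is regarded as an open subset of the real inner product space ℂᵏ × ℂˢ ≅ ℝ^{2(k+s)}, is a pseudo harmonic morphism: it is harmonic and pseudo-horizontally weakly conformal. -/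
/-!
The map `η` is holomorphic for the orthogonal complex structure `J (u, v) = (iu, -iv)` on
`ℂᵏ × ℂˢ` (`twistedJ`), since conjugation turns a function holomorphic in `v` for `i` into one
holomorphic for `-i` (`fderiv_mul_conj_twistedJ`).

Holomorphy with respect to any orthogonal complex structure `J` implies the claim
(`phmOn_of_holomorphic`). For each component `u + iv` the Cauchy–Riemann equations say `∇v = J ∇u`;
the two PHWC identities are then the orthogonality and the skewness of `J`. Differentiating,
`Hess v = J ∘ Hess u` is a skew operator composed with a symmetric one, so its trace vanishes, and
the same argument applies to `∇u = -J ∇v`.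

Holomorphic functions of several variables, assumed only complex-differentiable, are shown to be
`C²` through Cauchy's formula in one complex direction (`contDiffOn_of_holomorphic`).
-/

open scoped RealInnerProductSpace

open scoped Topology

/-! ### Holomorphic functions of several variables are smooth -/

section Regularity

open Metric Complex MeasureTheory

/-- The directional derivatives of a holomorphic function of several variables are holomorphic.
Near a point, Cauchy's formula on a small disc in the direction `e` writes `fderiv ℂ f x e` as the
integral of `f (x + ζ • e) / ζ ^ 2` over a fixed circle, and the Schwarz lemma bounds `fderiv ℂ f`
locally, so that one may differentiate under the integral sign. -/
lemma differentiableOn_fderiv_apply {E : Type*} [NormedAddCommGroup E] [NormedSpace ℂ E]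
    [FiniteDimensional ℂ E] {f : E → ℂ} {U : Set E} (hU : IsOpen U)
    (hf : DifferentiableOn ℂ f U) (e : E) :
    DifferentiableOn ℂ (fun x => fderiv ℂ f x e) U := by
  intro x₀ hx₀
  apply DifferentiableAt.differentiableWithinAt
  have hcont : ContinuousAt f x₀ := (hf.differentiableAt (hU.mem_nhds hx₀)).continuousAt
  obtain ⟨ε, hε, hball⟩ := Metric.mem_nhds_iff.1
    (Filter.inter_mem (hU.mem_nhds hx₀) (hcont.preimage_mem_nhds (ball_mem_nhds (f x₀) one_pos)))
  have hdiff : ∀ y ∈ ball x₀ ε, DifferentiableAt ℂ f y := fun y hy =>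
    hf.differentiableAt (hU.mem_nhds (hball hy).1)
  -- `f` varies by at most `2` on `ball x₀ ε`, whence a uniform bound on the half-radius ball.
  have hbound : ∀ y ∈ ball x₀ (ε / 2), ‖fderiv ℂ f y‖ ≤ 2 / (ε / 2) := by
    intro y hy
    have hsub : ball y (ε / 2) ⊆ ball x₀ ε := by
      apply ball_subset_ball'
      have := mem_ball.1 hy
      linarith
    refine Complex.norm_fderiv_le_div_of_mapsTo_ball
      (fun z hz => (hdiff z (hsub hz)).differentiableWithinAt) (fun z hz => ?_) (by positivity)
    have h1 : dist (f z) (f x₀) < 1 := (hball (hsub hz)).2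
    have h2 : dist (f y) (f x₀) < 1 := (hball (hsub (mem_ball_self (by positivity)))).2
    have h3 := dist_triangle_right (f z) (f y) (f x₀)
    rw [mem_closedBall]
    linarith
  obtain ⟨ρ, hρ, hρe⟩ : ∃ ρ : ℝ, 0 < ρ ∧ ρ * ‖e‖ < ε / 4 := by
    refine ⟨ε / 4 / (‖e‖ + 1), by positivity, ?_⟩
    rw [div_mul_eq_mul_div, div_lt_iff₀ (by positivity)]
    nlinarith
  have hmem : ∀ x ∈ ball x₀ (ε / 4), ∀ ζ : ℂ, ‖ζ‖ ≤ ρ → x + ζ • e ∈ ball x₀ (ε / 2) := by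
    intro x hx ζ hζ
    rw [mem_ball, dist_eq_norm] at hx ⊢
    have h1 : ‖x + ζ • e - x₀‖ ≤ ‖x - x₀‖ + ‖ζ • e‖ := by
      rw [show x + ζ • e - x₀ = (x - x₀) + ζ • e by abel]
      exact norm_add_le _ _
    have h2 : ‖ζ • e‖ ≤ ρ * ‖e‖ := by
      rw [norm_smul]
      gcongr
    linarith
  have hhalf : ball x₀ (ε / 2) ⊆ ball x₀ ε := ball_subset_ball (by linarith)
  have hcirc : ∀ t : ℝ, ‖circleMap 0 ρ t‖ ≤ ρ := fun t => by
    simp [abs_of_pos hρ]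
  let c : ℝ → ℂ := fun t => deriv (circleMap 0 ρ) t * (1 / (circleMap 0 ρ t) ^ 2)
  have hc : Continuous c := by
    have h0 : ∀ t, circleMap 0 ρ t ≠ 0 := fun t => circleMap_ne_center hρ.ne'
    have : c = fun t => circleMap 0 ρ t * I * (1 / (circleMap 0 ρ t) ^ 2) := by
      funext t
      simp [c]
    rw [this]
    refine Continuous.mul (by fun_prop) (Continuous.div (by fun_prop) (by fun_prop) ?_)
    exact fun t => pow_ne_zero 2 (h0 t)
  have hcauchy : ∀ x ∈ ball x₀ (ε / 4),
      fderiv ℂ f x e = (2 * Real.pi * I)⁻¹ *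
        ∫ t in (0 : ℝ)..2 * Real.pi, c t * f (x + circleMap 0 ρ t • e) := by
    intro x hx
    have hline : ∀ ζ : ℂ, ‖ζ‖ ≤ ρ →
        HasDerivAt (fun ζ : ℂ => f (x + ζ • e)) (fderiv ℂ f (x + ζ • e) e) ζ := by
      intro ζ hζ
      have h1 : HasDerivAt (fun ζ : ℂ => x + ζ • e) e ζ := by
        simpa using ((hasDerivAt_id ζ).smul_const e).const_add x
      exact (hdiff _ (hhalf (hmem x hx ζ hζ))).hasFDerivAt.comp_hasDerivAt ζ h1
    have h2 := DifferentiableOn.deriv_eq_smul_circleIntegral (f := fun ζ : ℂ => f (x + ζ • e))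
      (c := 0) hρ (fun ζ hζ => (hline ζ (by simpa using hζ)).differentiableAt.differentiableWithinAt)
    have h3 := (hline 0 (by simpa using hρ.le)).deriv
    rw [h3] at h2
    simp only [zero_smul, add_zero, circleIntegral, smul_eq_mul, sub_zero] at h2
    have hpi : (2 * Real.pi * I : ℂ) ≠ 0 := by simp [Real.pi_ne_zero]
    rw [eq_inv_mul_iff_mul_eq₀ hpi, ← h2]
    simp only [c, mul_assoc]
  have hint : ∀ x ∈ ball x₀ (ε / 4),
      Continuous fun t : ℝ => c t * f (x + circleMap 0 ρ t • e) := by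
    intro x hx
    refine hc.mul (continuous_iff_continuousAt.2 fun t => ?_)
    exact ContinuousAt.comp (f := fun t : ℝ => x + circleMap 0 ρ t • e)
      (hdiff _ (hhalf (hmem x hx _ (hcirc t)))).continuousAt (by fun_prop)
  have hnhds : ball x₀ (ε / 4) ∈ 𝓝 x₀ := ball_mem_nhds _ (by positivity)
  have key : HasFDerivAt
      (fun x => ∫ t in (0 : ℝ)..2 * Real.pi, c t * f (x + circleMap 0 ρ t • e))
      (∫ t in (0 : ℝ)..2 * Real.pi, c t • fderiv ℂ f (x₀ + circleMap 0 ρ t • e)) x₀ := by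
    refine intervalIntegral.hasFDerivAt_integral_of_dominated_of_fderiv_le
      (F := fun x t => c t * f (x + circleMap 0 ρ t • e))
      (F' := fun x t => c t • fderiv ℂ f (x + circleMap 0 ρ t • e))
      (bound := fun t => ‖c t‖ * (2 / (ε / 2))) hnhds ?_ ?_ ?_ ?_ ?_ ?_
    · filter_upwards [hnhds] with x hx
      exact (hint x hx).aestronglyMeasurable
    · exact (hint x₀ (mem_ball_self (by positivity))).intervalIntegrable _ _
    · borelize E
      have : ProperSpace E := FiniteDimensional.proper ℂ E
      have : SecondCountableTopology (E →L[ℂ] ℂ) := inferInstance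
      borelize (E →L[ℂ] ℂ)
      have h1 : Measurable fun t : ℝ => fderiv ℂ f (x₀ + circleMap 0 ρ t • e) :=
        (measurable_fderiv ℂ f).comp
          (by fun_prop : Continuous fun t : ℝ => x₀ + circleMap 0 ρ t • e).measurable
      exact (hc.aestronglyMeasurable).smul h1.aestronglyMeasurable
    · refine Filter.Eventually.of_forall fun t _ x hx => ?_
      rw [norm_smul]
      gcongr
      exact hbound _ (hmem x hx _ (hcirc t))
    · exact (by fun_prop : Continuous fun t => ‖c t‖ * (2 / (ε / 2))).intervalIntegrable _ _
    · refine Filter.Eventually.of_forall fun t _ x hx => ?_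
      have h1 := (hdiff _ (hhalf (hmem x hx _ (hcirc t)))).hasFDerivAt
      exact ((hasFDerivAt_comp_add_right _).2 h1).const_mul (c t)
  refine (key.differentiableAt.const_mul ((2 * Real.pi * I : ℂ)⁻¹)).congr_of_eventuallyEq ?_
  filter_upwards [hnhds] with x hx using hcauchy x hx

lemma contDiffOn_of_holomorphic {E : Type*} [NormedAddCommGroup E] [NormedSpace ℂ E]
    [FiniteDimensional ℂ E] {U : Set E} (hU : IsOpen U) (n : ℕ) {f : E → ℂ}
    (hf : DifferentiableOn ℂ f U) : ContDiffOn ℂ n f U := by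
  induction n generalizing f with
  | zero => simpa using hf.continuousOn
  | succ n ih =>
    push_cast
    rw [contDiffOn_succ_iff_fderiv_of_isOpen hU]
    exact ⟨hf, by simp, contDiffOn_clm_apply.2 fun e =>
      ih (differentiableOn_fderiv_apply hU hf e)⟩

end Regularity

/-! ### Maps holomorphic for an orthogonal complex structure -/

section ComplexStructure

variable {E : Type*} [NormedAddCommGroup E] [InnerProductSpace ℝ E] [CompleteSpace E]

/-- For `φ = u + iv` complex-linear to first order with respect to a skew-adjoint `J`, the
Cauchy–Riemann equations read `∇v = J ∇u`. -/
lemma gradient_im_eq {J : E →L[ℝ] E} (hskew : ∀ x y, ⟪J x, y⟫ = -⟪x, J y⟫)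
    {φ : E → ℂ} {x : E} (hφ : DifferentiableAt ℝ φ x)
    (hJ : ∀ w, fderiv ℝ φ x (J w) = Complex.I * fderiv ℝ φ x w) :
    gradient (fun y => (φ y).im) x = J (gradient (fun y => (φ y).re) x) := by
  have hre : HasFDerivAt (fun y => (φ y).re) (Complex.reCLM.comp (fderiv ℝ φ x)) x :=
    Complex.reCLM.hasFDerivAt.comp x hφ.hasFDerivAt
  have him : HasFDerivAt (fun y => (φ y).im) (Complex.imCLM.comp (fderiv ℝ φ x)) x :=
    Complex.imCLM.hasFDerivAt.comp x hφ.hasFDerivAt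
  refine ext_inner_right ℝ fun w => ?_
  rw [hskew, inner_gradient_left, inner_gradient_left, hre.fderiv, him.fderiv]
  simp [hJ]

lemma hasFDerivAt_gradient {f : E → ℝ} {x : E} (hf : ContDiffAt ℝ 2 f x) :
    HasFDerivAt (gradient f)
      ((InnerProductSpace.toDual ℝ E).symm.toContinuousLinearEquiv.toContinuousLinearMap.comp
        (fderiv ℝ (fderiv ℝ f) x)) x := by
  have h1 : DifferentiableAt ℝ (fderiv ℝ f) x :=
    (hf.fderiv_right (m := 1) (by norm_num)).differentiableAt (by norm_num)
  exact (InnerProductSpace.toDual ℝ E).symm.toContinuousLinearEquiv.toContinuousLinearMap.hasFDerivAt.comp x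
    h1.hasFDerivAt

lemma trace_skew_comp_symm [FiniteDimensional ℝ E] {J H : E →ₗ[ℝ] E}
    (hskew : ∀ x y, ⟪J x, y⟫ = -⟪x, J y⟫) (hsymm : ∀ x y, ⟪H x, y⟫ = ⟪x, H y⟫) :
    LinearMap.trace ℝ E (J ∘ₗ H) = 0 := by
  have h1 : LinearMap.trace ℝ E (J ∘ₗ H) = -LinearMap.trace ℝ E (H ∘ₗ J) := by
    rw [LinearMap.trace_eq_sum_inner _ (stdOrthonormalBasis ℝ E),
      LinearMap.trace_eq_sum_inner _ (stdOrthonormalBasis ℝ E), ← Finset.sum_neg_distrib]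
    refine Finset.sum_congr rfl fun i _ => ?_
    simp only [LinearMap.comp_apply]
    rw [← hsymm, real_inner_comm, hskew]
  have h2 := LinearMap.trace_comp_comm' J H
  linarith

/-- If `∇h = J ∇f` near `x` with `J` skew-adjoint, the Hessian of `h` is the product of a skew and
a symmetric operator, hence has trace zero. -/
lemma lap_eq_zero [FiniteDimensional ℝ E] {J : E →L[ℝ] E}
    (hskew : ∀ x y, ⟪J x, y⟫ = -⟪x, J y⟫) {f h : E → ℝ} {x : E} (hf : ContDiffAt ℝ 2 f x)
    (hgrad : gradient h =ᶠ[𝓝 x] fun y => J (gradient f y)) : lap h x = 0 := by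
  have h1 := hasFDerivAt_gradient hf
  have h2 := (J.hasFDerivAt.comp x h1).congr_of_eventuallyEq hgrad
  unfold lap
  rw [h2.fderiv]
  have hsym : IsSymmSndFDerivAt ℝ f x := hf.isSymmSndFDerivAt (by simp)
  refine trace_skew_comp_symm (J := J) (H := (((InnerProductSpace.toDual
    ℝ E).symm.toContinuousLinearEquiv.toContinuousLinearMap.comp (fderiv ℝ (fderiv ℝ f) x) : E →L[ℝ] E) : E →ₗ[ℝ] E))
    hskew fun v w => ?_
  rw [real_inner_comm _ v]
  simpa using hsym v w

/-- A `C²` map which is holomorphic with respect to an orthogonal complex structure `J` on the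
source is a pseudo harmonic morphism. -/
lemma phmOn_of_holomorphic [FiniteDimensional ℝ E] {J : E →L[ℝ] E}
    (hskew : ∀ x y, ⟪J x, y⟫ = -⟪x, J y⟫) (hsq : ∀ x, J (J x) = -x)
    {n : ℕ} {φ : E → Fin n → ℂ} {W : Set E} (hW : IsOpen W)
    (hφ : ∀ i, ContDiffOn ℝ 2 (fun y => φ y i) W)
    (hJ : ∀ i, ∀ x ∈ W, ∀ w,
      fderiv ℝ (fun y => φ y i) x (J w) = Complex.I * fderiv ℝ (fun y => φ y i) x w) :
    PHMOn φ W := by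
  have hgrad : ∀ i, ∀ x ∈ W, gradient (fun y => (φ y i).im) x =
      J (gradient (fun y => (φ y i).re) x) := fun i x hx =>
    gradient_im_eq hskew
      (((hφ i).contDiffAt (hW.mem_nhds hx)).differentiableAt (by norm_num)) (hJ i x hx)
  have hre : ∀ i, ContDiffOn ℝ 2 (fun y => (φ y i).re) W := fun i =>
    Complex.reCLM.contDiff.comp_contDiffOn (hφ i)
  have him : ∀ i, ContDiffOn ℝ 2 (fun y => (φ y i).im) W := fun i =>
    Complex.imCLM.contDiff.comp_contDiffOn (hφ i)
  refine ⟨contDiffOn_pi.2 hφ, fun i => ⟨⟨hre i, fun x hx => ?_⟩, him i, fun x hx => ?_⟩, ?_⟩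
  · refine lap_eq_zero (J := -J) (fun x y => by simp [hskew])
      ((him i).contDiffAt (hW.mem_nhds hx)) ?_
    filter_upwards [hW.mem_nhds hx] with y hy
    simp [hgrad i y hy, hsq]
  · refine lap_eq_zero hskew ((hre i).contDiffAt (hW.mem_nhds hx)) ?_
    filter_upwards [hW.mem_nhds hx] with y hy using hgrad i y hy
  · intro A B x hx
    rw [hgrad A x hx, hgrad B x hx]
    constructor <;> simp [hskew, hsq]

end ComplexStructure

/-! ### The complex structure on the product -/

section Product

variable {k s : ℕ}

lemma inner_I_smul {k : ℕ} (x y : EuclideanSpace ℂ (Fin k)) :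
    ⟪Complex.I • x, y⟫ = -⟪x, Complex.I • y⟫ := by
  simp only [PiLp.inner_apply, Complex.inner, ← Finset.sum_neg_distrib]
  refine Finset.sum_congr rfl fun i _ => ?_
  simp
  ring

/-- The orthogonal complex structure `(u, v) ↦ (iu, -iv)` on `ℂᵏ × ℂˢ`, for which functions of the
form `f u * conj (g v)`, with `f` and `g` holomorphic, are holomorphic. -/
noncomputable def twistedJ (k s : ℕ) :
    WithLp 2 (EuclideanSpace ℂ (Fin k) × EuclideanSpace ℂ (Fin s)) →L[ℝ]
      WithLp 2 (EuclideanSpace ℂ (Fin k) × EuclideanSpace ℂ (Fin s)) :=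
  let e := WithLp.prodContinuousLinearEquiv 2 ℝ (EuclideanSpace ℂ (Fin k))
    (EuclideanSpace ℂ (Fin s))
  (e.symm : _ →L[ℝ] _).comp
    (((Complex.I • ContinuousLinearMap.id ℝ (EuclideanSpace ℂ (Fin k))).prodMap
      (-(Complex.I • ContinuousLinearMap.id ℝ (EuclideanSpace ℂ (Fin s))))).comp
        (e : _ →L[ℝ] _))

lemma twistedJ_fst (z : WithLp 2 (EuclideanSpace ℂ (Fin k) × EuclideanSpace ℂ (Fin s))) :
    (twistedJ k s z).ofLp.1 = Complex.I • z.ofLp.1 := rfl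

lemma twistedJ_snd (z : WithLp 2 (EuclideanSpace ℂ (Fin k) × EuclideanSpace ℂ (Fin s))) :
    (twistedJ k s z).ofLp.2 = -(Complex.I • z.ofLp.2) := rfl

lemma twistedJ_skew (x y : WithLp 2 (EuclideanSpace ℂ (Fin k) × EuclideanSpace ℂ (Fin s))) :
    ⟪twistedJ k s x, y⟫ = -⟪x, twistedJ k s y⟫ := by
  rw [WithLp.prod_inner_apply, WithLp.prod_inner_apply, twistedJ_fst, twistedJ_snd, twistedJ_fst,
    twistedJ_snd, inner_neg_left, inner_neg_right, inner_I_smul, inner_I_smul]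
  ring

lemma twistedJ_sq (x : WithLp 2 (EuclideanSpace ℂ (Fin k) × EuclideanSpace ℂ (Fin s))) :
    twistedJ k s (twistedJ k s x) = -x := by
  apply WithLp.ofLp_injective
  refine Prod.ext ?_ ?_
  · rw [twistedJ_fst, twistedJ_fst, smul_smul, Complex.I_mul_I]
    simp
  · rw [twistedJ_snd, twistedJ_snd, smul_neg, smul_smul, Complex.I_mul_I]
    simp

/-- `f u * conj (g v)` is holomorphic for `twistedJ`: its differential at `(a, b)` sends `(p, q)`
to `f a * conj (dg q) + conj (g b) * df p`, and replacing `(p, q)` by `(ip, -iq)` multiplies both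
terms by `i`. -/
lemma fderiv_mul_conj_twistedJ {f : EuclideanSpace ℂ (Fin k) → ℂ}
    {g : EuclideanSpace ℂ (Fin s) → ℂ}
    {z : WithLp 2 (EuclideanSpace ℂ (Fin k) × EuclideanSpace ℂ (Fin s))}
    (hf : DifferentiableAt ℂ f z.ofLp.1) (hg : DifferentiableAt ℂ g z.ofLp.2)
    (w : WithLp 2 (EuclideanSpace ℂ (Fin k) × EuclideanSpace ℂ (Fin s))) :
    fderiv ℝ (fun z : WithLp 2 (EuclideanSpace ℂ (Fin k) × EuclideanSpace ℂ (Fin s)) =>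
        f z.ofLp.1 * (starRingEnd ℂ) (g z.ofLp.2)) z (twistedJ k s w) =
      Complex.I * fderiv ℝ
        (fun z : WithLp 2 (EuclideanSpace ℂ (Fin k) × EuclideanSpace ℂ (Fin s)) =>
          f z.ofLp.1 * (starRingEnd ℂ) (g z.ofLp.2)) z w := by
  let e : WithLp 2 (EuclideanSpace ℂ (Fin k) × EuclideanSpace ℂ (Fin s)) →L[ℝ]
      EuclideanSpace ℂ (Fin k) × EuclideanSpace ℂ (Fin s) :=
    (WithLp.prodContinuousLinearEquiv 2 ℝ (EuclideanSpace ℂ (Fin k))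
      (EuclideanSpace ℂ (Fin s))).toContinuousLinearMap
  have h1 := (hf.hasFDerivAt.restrictScalars ℝ).comp z
    ((ContinuousLinearMap.fst ℝ _ _).comp e).hasFDerivAt
  have h2 := Complex.conjCLE.toContinuousLinearMap.hasFDerivAt.comp z
    ((hg.hasFDerivAt.restrictScalars ℝ).comp z
      ((ContinuousLinearMap.snd ℝ _ _).comp e).hasFDerivAt)
  have h3 := h1.mul h2
  have key : ∀ w : WithLp 2 (EuclideanSpace ℂ (Fin k) × EuclideanSpace ℂ (Fin s)),
      fderiv ℝ (fun z : WithLp 2 (EuclideanSpace ℂ (Fin k) × EuclideanSpace ℂ (Fin s)) =>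
        f z.ofLp.1 * (starRingEnd ℂ) (g z.ofLp.2)) z w =
      f z.ofLp.1 * (starRingEnd ℂ) (fderiv ℂ g z.ofLp.2 w.ofLp.2) +
        (starRingEnd ℂ) (g z.ofLp.2) * fderiv ℂ f z.ofLp.1 w.ofLp.1 := fun w =>
    congrArg (fun L => L w) h3.fderiv
  rw [key, key, twistedJ_fst, twistedJ_snd, map_neg, map_smul, map_smul]
  simp
  ring

lemma contDiffOn_mul_conj {U : Set (EuclideanSpace ℂ (Fin k))}
    {V : Set (EuclideanSpace ℂ (Fin s))} (hU : IsOpen U) (hV : IsOpen V)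
    {f : EuclideanSpace ℂ (Fin k) → ℂ} {g : EuclideanSpace ℂ (Fin s) → ℂ}
    (hf : DifferentiableOn ℂ f U) (hg : DifferentiableOn ℂ g V) :
    ContDiffOn ℝ 2
      (fun z : WithLp 2 (EuclideanSpace ℂ (Fin k) × EuclideanSpace ℂ (Fin s)) =>
        f z.ofLp.1 * (starRingEnd ℂ) (g z.ofLp.2))
      ((WithLp.equiv 2 (EuclideanSpace ℂ (Fin k) × EuclideanSpace ℂ (Fin s))) ⁻¹' (U ×ˢ V)) := by
  let e : WithLp 2 (EuclideanSpace ℂ (Fin k) × EuclideanSpace ℂ (Fin s)) →L[ℝ]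
      EuclideanSpace ℂ (Fin k) × EuclideanSpace ℂ (Fin s) :=
    (WithLp.prodContinuousLinearEquiv 2 ℝ (EuclideanSpace ℂ (Fin k))
      (EuclideanSpace ℂ (Fin s))).toContinuousLinearMap
  have h1 := ((contDiffOn_of_holomorphic hU 2 hf).restrict_scalars ℝ).comp
    ((ContinuousLinearMap.fst ℝ _ _).comp e).contDiff.contDiffOn
    (fun z (hz : z ∈ (WithLp.equiv 2 (EuclideanSpace ℂ (Fin k) × EuclideanSpace ℂ (Fin s)))
      ⁻¹' (U ×ˢ V)) => hz.1)
  have h2 := ((contDiffOn_of_holomorphic hV 2 hg).restrict_scalars ℝ).comp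
    ((ContinuousLinearMap.snd ℝ _ _).comp e).contDiff.contDiffOn
    (fun z (hz : z ∈ (WithLp.equiv 2 (EuclideanSpace ℂ (Fin k) × EuclideanSpace ℂ (Fin s)))
      ⁻¹' (U ×ˢ V)) => hz.2)
  exact h1.mul (Complex.conjCLE.toContinuousLinearMap.contDiff.comp_contDiffOn h2)

end Product

/-- For holomorphic functions `fᵢ : U → ℂ` on an open set `U ⊆ ℂᵏ` and holomorphic
functions `gᵢ : V → ℂ` on an open set `V ⊆ ℂˢ`, the map
`η(u, v) = (f₁(u)·conj(g₁(v)), …, f_r(u)·conj(g_r(v)))`, defined on `U × V` regarded as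
an open subset of the real inner product space `ℂᵏ × ℂˢ ≅ ℝ^{2(k+s)}`, is a pseudo
harmonic morphism. -/
theorem holom_times_conj_holom_is_phm {k s r : ℕ} (hr : 1 ≤ r)
    (U : Set (EuclideanSpace ℂ (Fin k))) (V : Set (EuclideanSpace ℂ (Fin s)))
    (hU : IsOpen U) (hV : IsOpen V) (hUne : U.Nonempty) (hVne : V.Nonempty)
    (f : Fin r → EuclideanSpace ℂ (Fin k) → ℂ) (g : Fin r → EuclideanSpace ℂ (Fin s) → ℂ)
    (hf : ∀ i, DifferentiableOn ℂ (f i) U) (hg : ∀ i, DifferentiableOn ℂ (g i) V) :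
    PHMOn
      (fun z : WithLp 2 (EuclideanSpace ℂ (Fin k) × EuclideanSpace ℂ (Fin s)) =>
        fun i : Fin r =>
          f i (WithLp.equiv 2 (EuclideanSpace ℂ (Fin k) × EuclideanSpace ℂ (Fin s)) z).1 *
            (starRingEnd ℂ)
              (g i (WithLp.equiv 2 (EuclideanSpace ℂ (Fin k) × EuclideanSpace ℂ (Fin s)) z).2))
      ((WithLp.equiv 2 (EuclideanSpace ℂ (Fin k) × EuclideanSpace ℂ (Fin s))) ⁻¹' (U ×ˢ V)) := by
  have hopen : IsOpen ((WithLp.equiv 2 (EuclideanSpace ℂ (Fin k) × EuclideanSpace ℂ (Fin s))) ⁻¹'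
      (U ×ˢ V)) :=
    (hU.prod hV).preimage (WithLp.prod_continuous_ofLp 2 _ _)
  exact phmOn_of_holomorphic twistedJ_skew twistedJ_sq hopen
    (fun i => contDiffOn_mul_conj hU hV (hf i) (hg i))
    (fun i z hz w => fderiv_mul_conj_twistedJ ((hf i).differentiableAt (hU.mem_nhds hz.1))
      ((hg i).differentiableAt (hV.mem_nhds hz.2)) w)
end
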